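/- arXiv:1801.10485 — 2 statements merged into one kernel-verified Lean document; each statement's English description precedes it below -/
import Mathlib

section
/- Let X be a smooth projective variety of dimension 2d over ℂ, let ℰ ∈ D^b(X) be a ℙ^d-object with ℙ^d-twist P_ℰ, let G be a split generator of D^b(X), and set A := Cone(Hom^{*-2}(ℰ,G) ⊗ ℰ → Hom^*(ℰ,G) ⊗ ℰ). Then for every n ≥ 1 and every t ∈ ℝ, δ_t(G, P_ℰ^n(G)) ≤ 1 + δ_t(G, A) · Σ_{k=0}^{n-1} e^{(-2dk+1)t}. -/
open CategoryTheory CategoryTheory.Limits CategoryTheory.Pretriangulated Filter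

universe v u

variable (C : Type u) [Category.{v} C] [Preadditive C] [HasZeroObject C]
  [HasShift C ℤ] [∀ n : ℤ, (shiftFunctor C n).Additive] [Pretriangulated C]
  [HasFiniteBiproducts C] [CategoryTheory.Linear ℂ C]
  [∀ X Y : C, Module.Finite ℂ (X ⟶ Y)]

/-- `BuildVal E t B r` : the object `B` can be built from the zero object by a tower of
`k` distinguished triangles whose successive cones are shifts `E⟦nᵢ⟧` of `E`,
with total weight `r = ∑ᵢ exp(nᵢ t)`. -/
inductive BuildVal (E : C) (t : ℝ) : C → ℝ → Prop
  | zero (Z : C) (hZ : IsZero Z) : BuildVal E t Z 0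
  | step (A B : C) (n : ℤ) (r : ℝ)
      (f : A ⟶ B) (g : B ⟶ (shiftFunctor C n).obj E)
      (h : (shiftFunctor C n).obj E ⟶ (shiftFunctor C (1 : ℤ)).obj A)
      (hT : Triangle.mk f g h ∈ distTriang C)
      (hA : BuildVal E t A r) :
      BuildVal E t B (r + Real.exp ((n : ℝ) * t))

/-- The set of weights `∑ᵢ exp(nᵢ t)` of towers of distinguished triangles with cones
shifts of `E`, ending at an object isomorphic to `F ⊕ F'` for some `F'`. -/
def complexitySet (E F : C) (t : ℝ) : Set ℝ :=
  {r | ∃ B F' : C, BuildVal C E t B r ∧ Nonempty (B ≅ F ⊞ F')}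

/-- The complexity `δ_t(E, F)` of `F` relative to `E` (Dimitrov–Haiden–Katzarkov–Kontsevich). -/
noncomputable def complexity (E F : C) (t : ℝ) : ℝ :=
  sInf (complexitySet C E F t)

/-- `F` lies in the split closure `⟨E⟩` of `E` (expressed via towers). -/
def InSplitClosure (E F : C) : Prop :=
  (complexitySet C E F 0).Nonempty

/-- `G` is a split generator of the triangulated category. -/
def IsSplitGenerator (G : C) : Prop :=
  ∀ F : C, InSplitClosure C G F

/-- The right orthogonal `E^⊥ = {F : Hom^*(E,F) = 0}`. -/
def rightOrthogonal (E : C) : Set C :=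
  {F | ∀ (n : ℤ) (f : E ⟶ (shiftFunctor C n).obj F), f = 0}

/-- A `ℙ^d`-object in a ℂ-linear triangulated category (an abstract model of a `ℙ^d`-object
in `D^b(X)` for `X` smooth projective of dimension `2d` over `ℂ`, in the sense of
Huybrechts–Thomas): `E` is a `2d`-Calabi–Yau object (the Serre-duality reformulation of
`E ⊗ ω_X ≅ E`) and the graded ring `Hom^*(E,E)` is isomorphic to
`H^*(ℙ^d; ℂ) = ℂ[h]/(h^{d+1})`, `deg h = 2`: the graded pieces `Hom^{2k}(E,E)`, `0 ≤ k ≤ d`,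
are one-dimensional, spanned by the powers `h^k`, and all other graded pieces vanish. -/
structure PdObject (d : ℕ) where
  E : C
  nonzero : ¬ IsZero E
  /-- Serre-duality form of `E ⊗ ω_X ≅ E` on a `2d`-dimensional variety:
  `Hom(E, F) ≅ Hom(F, E[2d])^∨` for every `F`. -/
  CY : ∀ F : C, (E ⟶ F) ≃ₗ[ℂ] Module.Dual ℂ (F ⟶ (shiftFunctor C (2 * (d : ℤ))).obj E)
  /-- a generator `h ∈ Hom²(E, E)`. -/
  h : E ⟶ (shiftFunctor C (2 : ℤ)).obj E
  /-- the powers `h^k ∈ Hom^{2k}(E, E)` of `h`. -/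
  hpow : ∀ k : ℕ, (E ⟶ (shiftFunctor C (2 * (k : ℤ))).obj E)
  hpow_zero : hpow 0 = (shiftFunctorZero' C (2 * ((0 : ℕ) : ℤ)) (by simp)).inv.app E
  hpow_succ : ∀ k : ℕ,
    hpow (k + 1) = h ≫ (shiftFunctor C (2 : ℤ)).map (hpow k) ≫
      (shiftFunctorAdd' C (2 * (k : ℤ)) (2 : ℤ) (2 * ((k + 1 : ℕ) : ℤ))
        (by push_cast; ring)).inv.app E
  /-- `Hom^{2k}(E,E)` is one-dimensional for `0 ≤ k ≤ d`. -/
  hom_rank_one : ∀ k : ℕ, k ≤ d →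
    Module.finrank ℂ (E ⟶ (shiftFunctor C (2 * (k : ℤ))).obj E) = 1
  /-- all other graded pieces of `Hom^*(E,E)` vanish. -/
  hom_rank_zero : ∀ n : ℤ, (¬ ∃ k : ℕ, k ≤ d ∧ n = 2 * (k : ℤ)) →
    ∀ f : E ⟶ (shiftFunctor C n).obj E, f = 0
  /-- the powers `h^k`, `k ≤ d`, are nonzero (so they span the graded pieces). -/
  hpow_ne_zero : ∀ k : ℕ, k ≤ d → hpow k ≠ 0

/-- The `ℙ^d`-twist `P_E` associated to a `ℙ^d`-object `E` (Huybrechts–Thomas):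
an autoequivalence `P` such that each `P(F)` is obtained by the double cone construction
`P(F) = Cone(Cone(Hom^{*-2}(E,F) ⊗ E → Hom^*(E,F) ⊗ E) → F)`.
Here `H F` models the object `Hom^*(E,F) ⊗ E`, i.e. the finite direct sum of shifts
`E[-n]` with multiplicity `dim Hom^n(E,F)`, so that `Hom^{*-2}(E,F) ⊗ E = (H F)[-2]`;
`θ F` models the map `h^∨·id − id·h`; `T F` models its cone; and `P F` is the cone of
the induced evaluation map `T F → F`. -/
structure PdTwist (d : ℕ) extends PdObject C d where
  /-- the twist autoequivalence. -/
  P : C ≌ C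
  /-- the twist commutes with the shift functors. -/
  commShift : P.functor.CommShift ℤ
  /-- `H F` models `Hom^*(E,F) ⊗ E`. -/
  H : C → C
  /-- `H F` is a finite direct sum of shifts `E[-n]`, with multiplicity
  `dim_ℂ Hom^n(E,F)` for each `n`. -/
  H_iso : ∀ F : C, ∃ (k : ℕ) (ns : Fin k → ℤ),
    Nonempty (H F ≅ biproduct (fun i => (shiftFunctor C (ns i)).obj E)) ∧
    ∀ n : ℤ, (Finset.univ.filter fun i => ns i = -n).card
        = Module.finrank ℂ (E ⟶ (shiftFunctor C n).obj F)
  /-- the map `h^∨·id − id·h : Hom^{*-2}(E,F) ⊗ E → Hom^*(E,F) ⊗ E`. -/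
  θ : ∀ F : C, (shiftFunctor C (-2 : ℤ)).obj (H F) ⟶ H F
  /-- the inner cone `T F = Cone(θ F)`. -/
  T : C → C
  ι : ∀ F : C, H F ⟶ T F
  π : ∀ F : C, T F ⟶ (shiftFunctor C (1 : ℤ)).obj ((shiftFunctor C (-2 : ℤ)).obj (H F))
  innerTri : ∀ F : C, Triangle.mk (θ F) (ι F) (π F) ∈ distTriang C
  /-- the map `T F → F` induced by the evaluation `Hom^*(E,F) ⊗ E → F`. -/
  ev : ∀ F : C, T F ⟶ F
  η : ∀ F : C, F ⟶ P.functor.obj F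
  dl : ∀ F : C, P.functor.obj F ⟶ (shiftFunctor C (1 : ℤ)).obj (T F)
  /-- `P F = Cone(T F → F)`. -/
  outerTri : ∀ F : C, Triangle.mk (ev F) (η F) (dl F) ∈ distTriang C

set_option linter.unusedSectionVars false

section Part0
variable {C}

open Polynomial in
theorem poly_split (m : ℂ[X]) (hm0 : m ≠ 0) :
    ∃ (p c r s : ℂ[X]) (k : ℕ), p * X ^ k = r * m ∧ (X + p) * c = 1 + s * m := by
  obtain ⟨q, hq, hnd⟩ := exists_eq_pow_rootMultiplicity_mul_and_not_dvd m hm0 0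
  generalize rootMultiplicity 0 m = n at hq
  rw [map_zero, sub_zero] at hq hnd
  have hcop : IsCoprime (X : ℂ[X]) q :=
    (irreducible_X.coprime_iff_not_dvd).2 hnd
  obtain ⟨a, b, hab⟩ := (hcop.pow_left (m := n + 1))
  have h1 : IsCoprime (X + b * q) (X : ℂ[X]) := by
    refine ⟨1, a * X ^ n - 1, ?_⟩
    linear_combination hab
  have h2 : IsCoprime (X + b * q) q := by
    obtain ⟨x, y, hxy⟩ := hcop
    exact ⟨x, y - x * b, by linear_combination hxy⟩
  obtain ⟨c, e, hce⟩ := (h1.pow_right (n := n)).mul_right h2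
  refine ⟨b * q, c, b, -e, n, ?_, ?_⟩
  · rw [hq]; ring
  · rw [hq]; linear_combination hce

open Polynomial in
theorem fitting_aux (S : Type*) [Ring S] [Algebra ℂ S] [Module.Finite ℂ S] (α : S) :
    ∃ (p c : ℂ[X]) (k : ℕ), aeval α p * α ^ k = 0 ∧ (α + aeval α p) * aeval α c = 1 ∧
      α ^ k * aeval α p = 0 ∧ aeval α c * (α + aeval α p) = 1 := by
  have hIntw : IsIntegral ℂ α := Algebra.IsIntegral.isIntegral α
  have hm0 : minpoly ℂ α ≠ 0 := minpoly.ne_zero hIntw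
  have hz := minpoly.aeval ℂ α
  obtain ⟨p, c, r, s, k, h1, h2⟩ := poly_split _ hm0
  have h3 : X ^ k * p = r * minpoly ℂ α := by rw [← h1, mul_comm]
  have h4 : c * (X + p) = 1 + s * minpoly ℂ α := by rw [← h2, mul_comm]
  refine ⟨p, c, k, ?_, ?_, ?_, ?_⟩
  · have := congrArg (aeval α) h1
    rwa [map_mul, map_mul, hz, mul_zero, map_pow, aeval_X] at this
  · have := congrArg (aeval α) h2
    rwa [map_mul, map_add, map_add, map_mul, hz, mul_zero, add_zero, map_one, aeval_X] at this
  · have := congrArg (aeval α) h3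
    rwa [map_mul, map_mul, hz, mul_zero, map_pow, aeval_X] at this
  · have := congrArg (aeval α) h4
    rwa [map_mul, map_add, map_add, map_mul, hz, mul_zero, add_zero, map_one, aeval_X] at this

theorem aeval_intertwine {X Y : C} (α : End X) (ε : End Y) (h : X ⟶ Y)
    (hh : CategoryStruct.comp (X := X) (Y := X) α h = CategoryStruct.comp (Y := Y) (Z := Y) h ε)
    (p : Polynomial ℂ) :
    CategoryStruct.comp (X := X) (Y := X) (Polynomial.aeval α p) h =
      CategoryStruct.comp (Y := Y) (Z := Y) h (Polynomial.aeval ε p) := by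
  induction p using Polynomial.induction_on' with
  | add p q hp hq =>
    rw [map_add, map_add]
    exact (Preadditive.add_comp _ _ _ _ _ _).trans
      ((congrArg₂ (· + ·) hp hq).trans (Preadditive.comp_add _ _ _ _ _ _).symm)
  | monomial n a =>
    rw [← Polynomial.C_mul_X_pow_eq_monomial]
    simp only [map_mul, Polynomial.aeval_C, map_pow, Polynomial.aeval_X,
      Algebra.algebraMap_eq_smul_one, smul_mul_assoc, one_mul]
    have : ∀ n : ℕ, CategoryStruct.comp (X := X) (Y := X) (α ^ n) h =
      CategoryStruct.comp (Y := Y) (Z := Y) h (ε ^ n) := by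
      intro n
      induction n with
      | zero => exact (Category.id_comp h).trans (Category.comp_id h).symm
      | succ n ih =>
        rw [pow_succ, pow_succ]
        refine (Category.assoc _ _ _).trans ?_
        refine (congrArg (fun z => CategoryStruct.comp (X := X) (Y := X) α z) ih).trans ?_
        refine (Category.assoc _ _ _).symm.trans ?_
        refine (congrArg (fun z => CategoryStruct.comp (Y := Y) (Z := Y) z (ε ^ n)) hh).trans ?_
        exact Category.assoc _ _ _
    exact (Linear.smul_comp _ _ _ _ _ _).trans
      ((congrArg (fun z => a • z) (this n)).trans (Linear.comp_smul _ _ _ _ _ _).symm)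

/-- Iterates of an endomorphism. -/
def hiter {X : C} (α : X ⟶ X) : ℕ → (X ⟶ X)
  | 0 => 𝟙 X
  | (k + 1) => α ≫ hiter α k

theorem hom_fitting {X : C} (α : X ⟶ X) : ∃ (F G : X ⟶ X) (k : ℕ),
    F ≫ hiter α k = 0 ∧ (α + F) ≫ G = 𝟙 X ∧ G ≫ (α + F) = 𝟙 X ∧
    ∀ (Y : C) (h : X ⟶ Y) (ε : Y ⟶ Y), α ≫ h = h ≫ ε →
      (∃ F', F ≫ h = h ≫ F') ∧ (∃ G', G ≫ h = h ≫ G') := by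
  have : Module.Finite ℂ (End X) := inferInstanceAs (Module.Finite ℂ (X ⟶ X))
  let a : End X := α
  obtain ⟨p, c, k, h1, h2, h3, h4⟩ := fitting_aux (End X) a
  have hk : ∀ k, hiter α k = (a ^ k : End X) := by
    intro k
    induction k with
    | zero => rfl
    | succ k ih => rw [pow_succ, ← ih]; rfl
  refine ⟨Polynomial.aeval a p, Polynomial.aeval a c, k, ?_, h4, h2, ?_⟩
  · rw [hk]; exact h3
  · intro Y h ε hh
    exact ⟨⟨_, aeval_intertwine a ε h hh p⟩, ⟨_, aeval_intertwine a ε h hh c⟩⟩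

section wrappers
variable {A B X : C} {f : A ⟶ B} {g : B ⟶ X} {h : X ⟶ A⟦(1 : ℤ)⟧}


theorem dt12 (hT : Triangle.mk f g h ∈ distTriang C)
    : f ≫ g = 0 := comp_distTriang_mor_zero₁₂ _ hT

theorem dt23 (hT : Triangle.mk f g h ∈ distTriang C)
    : g ≫ h = 0 := comp_distTriang_mor_zero₂₃ _ hT

theorem dt31 (hT : Triangle.mk f g h ∈ distTriang C)
    : h ≫ f⟦(1 : ℤ)⟧' = 0 := comp_distTriang_mor_zero₃₁ _ hT

theorem dty2 (hT : Triangle.mk f g h ∈ distTriang C)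
    {W : C} (x : B ⟶ W) (hx : f ≫ x = 0) : ∃ y, x = g ≫ y :=
  Triangle.yoneda_exact₂ _ hT x hx

theorem dty3 (hT : Triangle.mk f g h ∈ distTriang C)
    {W : C} (x : X ⟶ W) (hx : g ≫ x = 0) : ∃ y, x = h ≫ y :=
  Triangle.yoneda_exact₃ _ hT x hx

theorem dtc1 (hT : Triangle.mk f g h ∈ distTriang C)
    {W : C} (x : W ⟶ A⟦(1 : ℤ)⟧) (hx : x ≫ f⟦(1 : ℤ)⟧' = 0) : ∃ y, x = y ≫ h :=
  Triangle.coyoneda_exact₁ _ hT x hx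

theorem dtc2 (hT : Triangle.mk f g h ∈ distTriang C)
    {W : C} (x : W ⟶ B) (hx : x ≫ g = 0) : ∃ y, x = y ≫ f :=
  Triangle.coyoneda_exact₂ _ hT x hx

theorem dtc3 (hT : Triangle.mk f g h ∈ distTriang C)
    {W : C} (x : W ⟶ X) (hx : x ≫ h = 0) : ∃ y, x = y ≫ g :=
  Triangle.coyoneda_exact₃ _ hT x hx

theorem dtrot (hT : Triangle.mk f g h ∈ distTriang C)
    : Triangle.mk g h (-f⟦(1 : ℤ)⟧') ∈ distTriang C := rot_of_distTriang _ hT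

theorem dttr3 (hT : Triangle.mk f g h ∈ distTriang C)
    {A' B' X' : C} {f' : A' ⟶ B'} {g' : B' ⟶ X'} {h' : X' ⟶ A'⟦(1 : ℤ)⟧}
    (hT' : Triangle.mk f' g' h' ∈ distTriang C)
    (a : A ⟶ A') (b : B ⟶ B')
    (hc : f ≫ b = a ≫ f') : ∃ c : X ⟶ X', g ≫ c = b ≫ g' ∧ h ≫ a⟦(1 : ℤ)⟧' = c ≫ h' :=
  complete_distinguished_triangle_morphism _ _ hT hT' a b hc

theorem dtiso (hT : Triangle.mk f g h ∈ distTriang C)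
    {A' B' X' : C} (a : A' ≅ A) (b : B' ≅ B) (c : X' ≅ X) :
    Triangle.mk (a.hom ≫ f ≫ b.inv) (b.hom ≫ g ≫ c.inv) (c.hom ≫ h ≫ (a.inv)⟦(1 : ℤ)⟧')
      ∈ distTriang C := by
  refine isomorphic_distinguished _ hT _ (Triangle.isoMk _ _ a b c ?_ ?_ ?_)
  · show (a.hom ≫ f ≫ b.inv) ≫ b.hom = a.hom ≫ f
    simp
  · show (b.hom ≫ g ≫ c.inv) ≫ c.hom = b.hom ≫ g
    simp
  · show (c.hom ≫ h ≫ (a.inv)⟦(1 : ℤ)⟧') ≫ (a.hom)⟦(1 : ℤ)⟧' = c.hom ≫ h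
    rw [Category.assoc, Category.assoc, ← Functor.map_comp, a.inv_hom_id, CategoryTheory.Functor.map_id,
      Category.comp_id]

theorem dtiso3 (hT : Triangle.mk f g h ∈ distTriang C)
    {X' : C} (c : X' ≅ X) :
    Triangle.mk f (g ≫ c.inv) (c.hom ≫ h) ∈ distTriang C := by
  have := dtiso hT (Iso.refl A) (Iso.refl B) c
  simpa using this
end wrappers

end Part0

section Part1
variable {C}

/-- Key lemma: in a Hom-finite pretriangulated category, a Hom-exact candidate triangle becomes
distinguished after changing its third morphism. -/
theorem dist_of_exact {A B X : C} (f : A ⟶ B) (g : B ⟶ X) (h : X ⟶ A⟦(1 : ℤ)⟧)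
    (hfg : f ≫ g = 0) (hgh : g ≫ h = 0) (hhf : h ≫ f⟦(1 : ℤ)⟧' = 0)
    (exB : ∀ (W : C) (z : W ⟶ B), z ≫ g = 0 → ∃ a, z = a ≫ f)
    (exX : ∀ (W : C) (z : W ⟶ X), z ≫ h = 0 → ∃ b, z = b ≫ g)
    (exA : ∀ (W : C) (z : W ⟶ A⟦(1 : ℤ)⟧), z ≫ f⟦(1 : ℤ)⟧' = 0 → ∃ x, z = x ≫ h)
    (wk : ∀ (W : C) (x : B ⟶ W), f ≫ x = 0 → ∃ y, x = g ≫ y) :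
    ∃ h', Triangle.mk f g h' ∈ distTriang C := by
  obtain ⟨X0, g0, h0, hT⟩ := distinguished_cocone_triangle f
  have hfg0 : f ≫ g0 = 0 := dt12 hT
  have hgh0 : g0 ≫ h0 = 0 := dt23 hT
  have hhf0 : h0 ≫ f⟦(1 : ℤ)⟧' = 0 := dt31 hT
  obtain ⟨u, hu⟩ := dty2 hT g hfg
  obtain ⟨v, hv⟩ := wk _ g0 hfg0
  obtain ⟨s, hs⟩ := dty3 hT (u ≫ v - 𝟙 _) (by
    rw [Preadditive.comp_sub, ← Category.assoc, ← hu, ← hv]; simp)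
  obtain ⟨l, hl⟩ := exA _ h0 hhf0
  obtain ⟨l', hl'⟩ := dtc1 hT h hhf
  obtain ⟨m, hm⟩ := exX _ (l' ≫ l - 𝟙 _) (by
    rw [Preadditive.sub_comp, Category.assoc, ← hl, ← hl']; simp)
  obtain ⟨ε, hε⟩ := dty3 hT (u ≫ h) (by rw [← Category.assoc, ← hu, hgh])
  obtain ⟨b, hb⟩ := exX _ (g0 ≫ l) (by rw [Category.assoc, ← hl, hgh0])
  obtain ⟨κ, hκ⟩ := dty3 hT (l ≫ v ≫ h0) (by
    rw [← Category.assoc, hb, Category.assoc, ← Category.assoc g, ← hv, hgh0, comp_zero])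
  have e1 : l' ≫ l = 𝟙 _ + m ≫ g := by rw [← hm]; abel
  have e2 : u ≫ v = 𝟙 _ + h0 ≫ s := by rw [← hs]; abel
  have hgv : g ≫ v ≫ h0 = 0 := by rw [← Category.assoc, ← hv, hgh0]
  obtain ⟨α, hαd⟩ : ∃ α : X0 ⟶ X0, α = u ≫ l' := ⟨_, rfl⟩
  obtain ⟨β, hβd⟩ : ∃ β : X0 ⟶ X0, β = l ≫ v := ⟨_, rfl⟩
  have hα : α ≫ h0 = h0 ≫ ε := by
    rw [hαd, Category.assoc, ← hl', hε]
  have hβ : β ≫ h0 = h0 ≫ κ := by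
    rw [hβd, Category.assoc, hκ]
  have hαβ : α ≫ β ≫ h0 = h0 + h0 ≫ s ≫ h0 := by
    have : α ≫ β ≫ h0 = u ≫ (l' ≫ l) ≫ v ≫ h0 := by rw [hαd, hβd]; simp
    rw [this, e1]
    simp only [Preadditive.add_comp, Preadditive.comp_add, Category.id_comp, Category.assoc,
      hgv, comp_zero, add_zero]
    rw [← Category.assoc, e2]
    simp
  have hpow : ∀ k : ℕ, ∃ (w : X0 ⟶ X0) (σ : A⟦(1 : ℤ)⟧ ⟶ X0),
      hiter α k ≫ w ≫ h0 = h0 + h0 ≫ σ ≫ h0 := by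
    intro k
    induction k with
    | zero => exact ⟨𝟙 _, 0, by simp [hiter]⟩
    | succ k ih =>
      obtain ⟨w, σ, hσ⟩ := ih
      refine ⟨w ≫ β, s + ε ≫ σ ≫ β, ?_⟩
      rw [hiter, Category.assoc, Category.assoc, hβ, reassoc_of% hσ, Preadditive.add_comp, ← hβ,
        Preadditive.comp_add, hαβ]
      simp only [Category.assoc]
      rw [← hβ, reassoc_of% hα]
      simp [add_assoc]
  obtain ⟨F, α2, k, hF0, h12, h21, hIntw⟩ := hom_fitting α
  obtain ⟨⟨pε, hFh⟩, ⟨cε, hch⟩⟩ := hIntw _ h0 ε hα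
  obtain ⟨w, σ, hσ⟩ := hpow k
  have hF : F ≫ h0 = h0 ≫ (- (pε ≫ σ)) ≫ h0 := by
    have e : F ≫ hiter α k ≫ w ≫ h0 = 0 := by
      rw [reassoc_of% hF0, zero_comp]
    rw [hσ, Preadditive.comp_add, reassoc_of% hFh] at e
    rw [Preadditive.neg_comp, Preadditive.comp_neg, Category.assoc]
    exact eq_neg_of_add_eq_zero_left e
  generalize - (pε ≫ σ) = τ at hF
  obtain ⟨u', hu'd⟩ : ∃ u' : X0 ⟶ X, u' = u + h0 ≫ τ ≫ l := ⟨_, rfl⟩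
  have hu' : g0 ≫ u' = g := by
    rw [hu'd, Preadditive.comp_add, ← hu, reassoc_of% hgh0]; simp
  have hα1 : (α + F) ≫ h0 = u' ≫ h := by
    rw [hu'd, Preadditive.add_comp, Preadditive.add_comp, hα, hF, hε]
    simp only [Category.assoc]
    rw [← hl]
  generalize α + F = α1 at *
  have hα2 : g0 ≫ α2 ≫ h0 = 0 := by
    rw [hch, reassoc_of% hgh0, zero_comp]
  have inj : ∀ {W : C} (x : W ⟶ X0), x ≫ u' = 0 → x = 0 := by
    intro W x hx
    obtain ⟨y, hy⟩ := dtc3 hT (x ≫ α1) (by rw [Category.assoc, hα1, reassoc_of% hx, zero_comp])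
    obtain ⟨w, hw⟩ := dtc3 hT (g0 ≫ α2) (by rw [Category.assoc, hα2])
    have hx2 : x = (y ≫ w) ≫ g0 := by
      rw [Category.assoc, ← hw, ← reassoc_of% hy, h12, Category.comp_id]
    obtain ⟨a, ha⟩ := exB _ (y ≫ w) (by rw [← hu', ← Category.assoc, ← hx2, hx])
    rw [hx2, ha, Category.assoc, hfg0, comp_zero]
  have surj : ∃ t : X ⟶ X0, t ≫ u' = 𝟙 X := by
    obtain ⟨w, hw⟩ := dtc1 hT h hhf
    obtain ⟨b, hb⟩ := exX _ (𝟙 X - w ≫ α2 ≫ u') (by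
      rw [Preadditive.sub_comp, Category.assoc, Category.assoc, ← hα1, reassoc_of% h21, ← hw]
      simp)
    refine ⟨w ≫ α2 + b ≫ g0, ?_⟩
    rw [Preadditive.add_comp, Category.assoc, Category.assoc, hu', ← hb]
    abel
  obtain ⟨t, ht⟩ := surj
  have ht' : u' ≫ t = 𝟙 _ := by
    have := inj (u' ≫ t - 𝟙 _) (by rw [Preadditive.sub_comp, Category.assoc, ht]; simp)
    exact sub_eq_zero.1 this
  have := dtiso3 hT ⟨t, u', ht, ht'⟩
  exact ⟨t ≫ h0, by rw [← hu']; exact this⟩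

/-- Any equivalence commuting with the shift `⟦1⟧` preserves distinguished triangles up to
changing the third morphism. -/
theorem dist_map (F : C ⥤ C) [F.IsEquivalence] [F.Additive]
    (c : shiftFunctor C (1 : ℤ) ⋙ F ≅ F ⋙ shiftFunctor C (1 : ℤ))
    {A B X : C} {f : A ⟶ B} {g : B ⟶ X} {h : X ⟶ A⟦(1 : ℤ)⟧}
    (hT : Triangle.mk f g h ∈ distTriang C) :
    ∃ h', Triangle.mk (F.map f) (F.map g) h' ∈ distTriang C := by
  have hfg : f ≫ g = 0 := dt12 hT
  have hgh : g ≫ h = 0 := dt23 hT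
  have hhf : h ≫ f⟦(1 : ℤ)⟧' = 0 := dt31 hT
  obtain ⟨cA, hcA⟩ : ∃ cA : F.obj (A⟦(1 : ℤ)⟧) ≅ (F.obj A)⟦(1 : ℤ)⟧, cA = c.app A := ⟨_, rfl⟩
  obtain ⟨cB, hcB⟩ : ∃ cB : F.obj (B⟦(1 : ℤ)⟧) ≅ (F.obj B)⟦(1 : ℤ)⟧, cB = c.app B := ⟨_, rfl⟩
  have nat : F.map (f⟦(1 : ℤ)⟧') ≫ cB.hom = cA.hom ≫ (F.map f)⟦(1 : ℤ)⟧' := by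
    rw [hcA, hcB]
    exact c.hom.naturality f
  have lift : ∀ {W Y : C} (z : W ⟶ F.obj Y), ∃ z' : F.objPreimage W ⟶ Y,
      z = (F.objObjPreimageIso W).inv ≫ F.map z' := by
    intro W Y z
    refine ⟨F.preimage ((F.objObjPreimageIso W).hom ≫ z), by simp⟩
  refine dist_of_exact (F.map f) (F.map g) (F.map h ≫ cA.hom) ?_ ?_ ?_ ?_ ?_ ?_ ?_
  · rw [← F.map_comp, hfg, F.map_zero]
  · rw [← Category.assoc, ← F.map_comp, hgh, F.map_zero, zero_comp]
  · rw [Category.assoc, ← nat, ← Category.assoc, ← F.map_comp, hhf, F.map_zero, zero_comp]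
  · intro W z hz
    obtain ⟨z', rfl⟩ := lift z
    rw [Category.assoc, ← F.map_comp, Iso.inv_comp_eq, comp_zero] at hz
    obtain ⟨a, rfl⟩ := dtc2 hT z' (F.map_injective (by
      rw [F.map_zero]; exact hz))
    exact ⟨(F.objObjPreimageIso W).inv ≫ F.map a, by
      rw [Category.assoc, ← F.map_comp]⟩
  · intro W z hz
    obtain ⟨z', rfl⟩ := lift z
    rw [← Category.assoc, ← cancel_mono cA.inv] at hz
    simp only [Category.assoc, Iso.hom_inv_id, zero_comp, Category.comp_id] at hz
    rw [← F.map_comp, Iso.inv_comp_eq, comp_zero] at hz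
    obtain ⟨a, rfl⟩ := dtc3 hT z' (F.map_injective (by
      rw [F.map_zero]; exact hz))
    exact ⟨(F.objObjPreimageIso W).inv ≫ F.map a, by
      rw [Category.assoc, ← F.map_comp]⟩
  · intro W z hz
    obtain ⟨z', hz'⟩ := lift (Y := A⟦(1 : ℤ)⟧) (z ≫ cA.inv)
    have hz2 : z = (F.objObjPreimageIso W).inv ≫ F.map z' ≫ cA.hom := by
      rw [← Category.assoc, ← hz', Category.assoc, Iso.inv_hom_id, Category.comp_id]
    rw [hz2, Category.assoc, Category.assoc, ← nat, Iso.inv_comp_eq, comp_zero, ← Category.assoc,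
      ← F.map_comp, ← cancel_mono cB.inv, Category.assoc, Iso.hom_inv_id,
      zero_comp, Category.comp_id] at hz
    obtain ⟨a, rfl⟩ := dtc1 hT z' (F.map_injective (by
      rw [F.map_zero]; exact hz))
    refine ⟨(F.objObjPreimageIso W).inv ≫ F.map a, ?_⟩
    rw [hz2, Category.assoc, F.map_comp, Category.assoc]
  · intro W x hx
    have hx' : F.map (F.preimage (x ≫ (F.objObjPreimageIso W).inv)) =
      x ≫ (F.objObjPreimageIso W).inv := by simp
    generalize F.preimage (x ≫ (F.objObjPreimageIso W).inv) = x' at hx'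
    obtain ⟨y, rfl⟩ := dty2 hT x' (F.map_injective (by
      rw [F.map_comp, hx', F.map_zero, reassoc_of% hx, zero_comp]))
    refine ⟨F.map y ≫ (F.objObjPreimageIso W).hom, ?_⟩
    rw [← Category.assoc, ← F.map_comp, hx']; simp

theorem dist_shift (m : ℤ) {A B X : C} {f : A ⟶ B} {g : B ⟶ X} {h : X ⟶ A⟦(1 : ℤ)⟧}
    (hT : Triangle.mk f g h ∈ distTriang C) :
    ∃ h', Triangle.mk (f⟦m⟧') (g⟦m⟧') h' ∈ distTriang C :=
  dist_map (shiftFunctor C m) (shiftFunctorComm C 1 m) hT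

/-- Homotopy cartesian squares have isomorphic parallel cones. -/
theorem dist_square {Y' Y Z' Z V : C} {a : Y' ⟶ Y} {b : Y' ⟶ Z'} {φ : Y ⟶ Z} {i : Z' ⟶ Z}
    {c : Z ⟶ Y'⟦(1 : ℤ)⟧} {j : Z ⟶ V} {k : V ⟶ Z'⟦(1 : ℤ)⟧}
    (h1 : Triangle.mk (biprod.lift a b) (biprod.desc φ i) c ∈ distTriang C)
    (h2 : Triangle.mk i j k ∈ distTriang C) :
    ∃ h', Triangle.mk a (φ ≫ j) h' ∈ distTriang C := by
  have e1 : a ≫ φ + b ≫ i = 0 := by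
    have := dt12 h1
    simpa using this
  have e2 : biprod.desc φ i ≫ c = 0 := dt23 h1
  have e2a : φ ≫ c = 0 := by simpa using biprod.inl ≫= e2
  have e2b : i ≫ c = 0 := by simpa using biprod.inr ≫= e2
  have e4 : i ≫ j = 0 := dt12 h2
  have hlift : biprod.lift a b = a ≫ biprod.inl + b ≫ biprod.inr := by
    ext <;> simp
  obtain ⟨m, hm1, hm2⟩ := dttr3 h2 (dtrot h1) (biprod.inr : Z' ⟶ Y ⊞ Z') (𝟙 Z) (by simp)
  rw [Category.id_comp] at hm1
  rw [Preadditive.comp_neg] at hm2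
  have hma : m ≫ a⟦(1 : ℤ)⟧' = 0 := by
    have := hm2 =≫ ((biprod.fst : Y ⊞ Z' ⟶ Y)⟦(1 : ℤ)⟧')
    rw [Preadditive.neg_comp, Category.assoc, Category.assoc, ← Functor.map_comp,
      ← Functor.map_comp, biprod.lift_fst, biprod.inr_fst, Functor.map_zero, comp_zero] at this
    exact neg_eq_zero.1 this.symm
  have hmb : m ≫ b⟦(1 : ℤ)⟧' = - k := by
    have := hm2 =≫ ((biprod.snd : Y ⊞ Z' ⟶ Z')⟦(1 : ℤ)⟧')
    rw [Preadditive.neg_comp, Category.assoc, Category.assoc, ← Functor.map_comp,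
      ← Functor.map_comp, biprod.lift_snd, biprod.inr_snd, CategoryTheory.Functor.map_id,
      Category.comp_id] at this
    rw [this, neg_neg]
  refine dist_of_exact a (φ ≫ j) m ?_ ?_ hma ?_ ?_ ?_ ?_
  · rw [← Category.assoc, eq_neg_of_add_eq_zero_left e1, Preadditive.neg_comp, Category.assoc, e4]
    simp
  · rw [Category.assoc, hm1, e2a]
  · intro W y hy
    obtain ⟨z, hz⟩ := dtc2 h2 (y ≫ φ) (by simpa using hy)
    obtain ⟨w, hw⟩ := dtc2 h1 (biprod.lift y (-z)) (by
      simp [hz])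
    refine ⟨w, ?_⟩
    have := hw =≫ biprod.fst
    simpa using this
  · intro W x hx
    obtain ⟨z, hz⟩ := dtc3 h2 x (by
      rw [← neg_eq_zero, ← Preadditive.comp_neg, ← hmb, reassoc_of% hx, zero_comp])
    obtain ⟨w, hw⟩ := dtc3 h1 z (by
      rw [← hm1, ← Category.assoc, ← hz, hx])
    refine ⟨w ≫ biprod.fst, ?_⟩
    rw [hz, hw, biprod.desc_eq]
    simp [e4]
  · intro W y hy
    obtain ⟨x, hx⟩ := dtc1 h2 (y ≫ b⟦(1 : ℤ)⟧') (by
      rw [Category.assoc, ← Functor.map_comp, eq_neg_of_add_eq_zero_right e1, Functor.map_neg,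
        Functor.map_comp, Preadditive.comp_neg, reassoc_of% hy]
      simp)
    obtain ⟨z, hz⟩ := dtc1 h1 (y + x ≫ m) (by
      rw [hlift, Functor.map_add, Functor.map_comp, Functor.map_comp]
      simp only [Preadditive.add_comp, Preadditive.comp_add, Category.assoc, reassoc_of% hy,
        reassoc_of% hma, reassoc_of% hx, reassoc_of% hmb]
      simp)
    refine ⟨z ≫ j - x, ?_⟩
    rw [Preadditive.sub_comp, Category.assoc, hm1, ← hz]; abel
  · intro W x hx
    obtain ⟨w, hw⟩ := dty2 h1 (biprod.desc x 0) (by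
      simp [hx])
    have hw1 : x = φ ≫ w := by simpa using biprod.inl ≫= hw
    have hw2 : i ≫ w = 0 := by simpa using (biprod.inr ≫= hw).symm
    obtain ⟨w', rfl⟩ := dty2 h2 w hw2
    refine ⟨w', ?_⟩
    rw [hw1, Category.assoc]

end Part1

section Part2
variable {C}

theorem bv_iso {G : C} {t : ℝ} {B B' : C} {r : ℝ} (hB : BuildVal C G t B r) (e : B ≅ B') :
    BuildVal C G t B' r := by
  cases hB with
  | zero _ hZ => exact .zero _ (hZ.of_iso e.symm)
  | step A _ n r f g h hT hA =>
    have := dtiso hT (Iso.refl A) e.symm (Iso.refl _)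
    exact .step A B' n r _ _ _ this hA

theorem bv_nonneg {G : C} {t : ℝ} {B : C} {r : ℝ} (hB : BuildVal C G t B r) : 0 ≤ r := by
  induction hB with
  | zero => exact le_rfl
  | step A B n r f g h hT hA ih => positivity

theorem bv_exists {G : C} {t s : ℝ} {B : C} {r : ℝ} (hB : BuildVal C G t B r) :
    ∃ r', BuildVal C G s B r' := by
  induction hB with
  | zero Z hZ => exact ⟨0, .zero Z hZ⟩
  | step A B n r f g h hT hA ih =>
    obtain ⟨r', hr'⟩ := ih
    exact ⟨_, .step A B n r' f g h hT hr'⟩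

theorem dt_invrot {A B X : C} {g : B ⟶ X} {h : X ⟶ A⟦(1 : ℤ)⟧} {k : A⟦(1 : ℤ)⟧ ⟶ B⟦(1 : ℤ)⟧}
    (hT : Triangle.mk g h k ∈ distTriang C) :
    ∃ f : A ⟶ B, f⟦(1 : ℤ)⟧' = - k ∧ Triangle.mk f g h ∈ distTriang C := by
  obtain ⟨f, hf⟩ := (shiftFunctor C (1 : ℤ)).map_surjective (-k)
  refine ⟨f, hf, ?_⟩
  rw [rotate_distinguished_triangle]
  show Triangle.mk g h (-f⟦(1 : ℤ)⟧') ∈ _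
  rw [hf, neg_neg]
  exact hT

theorem dist_fiber {B X : C} (g : B ⟶ X) :
    ∃ (A : C) (f : A ⟶ B) (h : X ⟶ A⟦(1 : ℤ)⟧), Triangle.mk f g h ∈ distTriang C :=
  distinguished_cocone_triangle₁ g

theorem bv_add {G : C} {t : ℝ} {X : C} {r1 : ℝ} (hX : BuildVal C G t X r1)
    {Z : C} {r2 : ℝ} (hZ : BuildVal C G t Z r2) :
    ∀ {Y : C} {x : X ⟶ Y} {y : Y ⟶ Z} {z : Z ⟶ X⟦(1 : ℤ)⟧},
      Triangle.mk x y z ∈ distTriang C → BuildVal C G t Y (r1 + r2) := by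
  induction hZ with
  | zero Z hZ =>
    intro Y x y z hT
    have : IsIso x := (Triangle.isZero₃_iff_isIso₁ _ hT).1 hZ
    rw [add_zero]
    exact bv_iso hX (asIso x)
  | step Z' Z n r f g h hT' hA ih =>
    intro Y x y z hT
    obtain ⟨Y', q, c, hq⟩ := dist_fiber (biprod.desc y f : Y ⊞ Z' ⟶ Z)
    obtain ⟨a, b, rfl⟩ : ∃ a b, q = biprod.lift a b := ⟨q ≫ biprod.fst, q ≫ biprod.snd, by
      ext <;> simp⟩
    obtain ⟨h', hT1⟩ := dist_square hq hT'
    have hq' := dtiso hq (Iso.refl _) (biprod.braiding Z' Y) (Iso.refl _)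
    have e1 : (Iso.refl Y').hom ≫ biprod.lift a b ≫ (biprod.braiding Z' Y).inv
        = biprod.lift b a := by
      ext <;> simp
    have e2 : (biprod.braiding Z' Y).hom ≫ biprod.desc y f ≫ (Iso.refl Z).inv
        = biprod.desc f y := by
      ext <;> simp
    rw [e1, e2] at hq'
    obtain ⟨h'', hT2⟩ := dist_square hq' (dtrot hT)
    obtain ⟨x', hx', hT3⟩ := dt_invrot hT2
    rw [← add_assoc]
    exact .step Y' Y n _ a (y ≫ g) h' hT1 (ih hT3)

theorem dist_biprod {A B X : C} {f : A ⟶ B} {g : B ⟶ X} {h : X ⟶ A⟦(1 : ℤ)⟧}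
    {A' B' X' : C} {f' : A' ⟶ B'} {g' : B' ⟶ X'} {h' : X' ⟶ A'⟦(1 : ℤ)⟧}
    (hT : Triangle.mk f g h ∈ distTriang C) (hT' : Triangle.mk f' g' h' ∈ distTriang C) :
    ∃ h'', Triangle.mk (biprod.map f f') (biprod.map g g') h'' ∈ distTriang C := by
  have hfg := dt12 hT
  have hgh := dt23 hT
  have hhf := dt31 hT
  have hfg' := dt12 hT'
  have hgh' := dt23 hT'
  have hhf' := dt31 hT'
  have m1 : (biprod.inl : A ⟶ A ⊞ A') ≫ biprod.map f f' = f ≫ biprod.inl := by simp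
  have m2 : (biprod.inr : A' ⟶ A ⊞ A') ≫ biprod.map f f' = f' ≫ biprod.inr := by simp
  have m3 : biprod.map f f' ≫ (biprod.fst : B ⊞ B' ⟶ B) = biprod.fst ≫ f := by simp
  have m4 : biprod.map f f' ≫ (biprod.snd : B ⊞ B' ⟶ B') = biprod.snd ≫ f' := by simp
  have k1 : (biprod.inl : A ⟶ A ⊞ A')⟦(1 : ℤ)⟧' ≫ (biprod.map f f')⟦(1 : ℤ)⟧'
      = f⟦(1 : ℤ)⟧' ≫ (biprod.inl : B ⟶ B ⊞ B')⟦(1 : ℤ)⟧' := by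
    rw [← Functor.map_comp, m1, Functor.map_comp]
  have k2 : (biprod.inr : A' ⟶ A ⊞ A')⟦(1 : ℤ)⟧' ≫ (biprod.map f f')⟦(1 : ℤ)⟧'
      = f'⟦(1 : ℤ)⟧' ≫ (biprod.inr : B' ⟶ B ⊞ B')⟦(1 : ℤ)⟧' := by
    rw [← Functor.map_comp, m2, Functor.map_comp]
  have k3 : (biprod.map f f')⟦(1 : ℤ)⟧' ≫ (biprod.fst : B ⊞ B' ⟶ B)⟦(1 : ℤ)⟧'
      = (biprod.fst : A ⊞ A' ⟶ A)⟦(1 : ℤ)⟧' ≫ f⟦(1 : ℤ)⟧' := by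
    rw [← Functor.map_comp, m3, Functor.map_comp]
  have k4 : (biprod.map f f')⟦(1 : ℤ)⟧' ≫ (biprod.snd : B ⊞ B' ⟶ B')⟦(1 : ℤ)⟧'
      = (biprod.snd : A ⊞ A' ⟶ A')⟦(1 : ℤ)⟧' ≫ f'⟦(1 : ℤ)⟧' := by
    rw [← Functor.map_comp, m4, Functor.map_comp]
  have s11 : (biprod.inl : A ⟶ A ⊞ A')⟦(1 : ℤ)⟧' ≫ (biprod.fst : A ⊞ A' ⟶ A)⟦(1 : ℤ)⟧' = 𝟙 _ := by
    rw [← Functor.map_comp, biprod.inl_fst, CategoryTheory.Functor.map_id]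
  have s22 : (biprod.inr : A' ⟶ A ⊞ A')⟦(1 : ℤ)⟧' ≫ (biprod.snd : A ⊞ A' ⟶ A')⟦(1 : ℤ)⟧'
      = 𝟙 _ := by
    rw [← Functor.map_comp, biprod.inr_snd, CategoryTheory.Functor.map_id]
  have s12 : (biprod.inl : A ⟶ A ⊞ A')⟦(1 : ℤ)⟧' ≫ (biprod.snd : A ⊞ A' ⟶ A')⟦(1 : ℤ)⟧' = 0 := by
    rw [← Functor.map_comp, biprod.inl_snd, Functor.map_zero]
  have s21 : (biprod.inr : A' ⟶ A ⊞ A')⟦(1 : ℤ)⟧' ≫ (biprod.fst : A ⊞ A' ⟶ A)⟦(1 : ℤ)⟧' = 0 := by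
    rw [← Functor.map_comp, biprod.inr_fst, Functor.map_zero]
  have tot : (biprod.fst : A ⊞ A' ⟶ A)⟦(1 : ℤ)⟧' ≫ (biprod.inl : A ⟶ A ⊞ A')⟦(1 : ℤ)⟧' +
      (biprod.snd : A ⊞ A' ⟶ A')⟦(1 : ℤ)⟧' ≫ (biprod.inr : A' ⟶ A ⊞ A')⟦(1 : ℤ)⟧' = 𝟙 _ := by
    rw [← Functor.map_comp, ← Functor.map_comp, ← Functor.map_add, biprod.total,
      CategoryTheory.Functor.map_id]
  refine dist_of_exact _ _ (biprod.desc (h ≫ (biprod.inl : A ⟶ A ⊞ A')⟦(1 : ℤ)⟧')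
    (h' ≫ (biprod.inr : A' ⟶ A ⊞ A')⟦(1 : ℤ)⟧')) ?_ ?_ ?_ ?_ ?_ ?_ ?_
  · ext <;> simp [hfg, hfg']
  · ext <;> simp [reassoc_of% hgh, reassoc_of% hgh']
  · ext
    · simp only [biprod.inl_desc_assoc, Category.assoc, comp_zero]
      rw [k1, reassoc_of% hhf, zero_comp]
    · simp only [biprod.inr_desc_assoc, Category.assoc, comp_zero]
      rw [k2, reassoc_of% hhf', zero_comp]
  · intro W z hz
    obtain ⟨a, ha⟩ := dtc2 hT (z ≫ biprod.fst) (by simpa using hz =≫ biprod.fst)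
    obtain ⟨b, hb⟩ := dtc2 hT' (z ≫ biprod.snd) (by simpa using hz =≫ biprod.snd)
    exact ⟨biprod.lift a b, by ext <;> simp [ha, hb]⟩
  · intro W z hz
    obtain ⟨a, ha⟩ := dtc3 hT (z ≫ biprod.fst) (by
      have := hz =≫ (biprod.fst : A ⊞ A' ⟶ A)⟦(1 : ℤ)⟧'
      rw [biprod.desc_eq] at this
      simpa [s11, s21] using this)
    obtain ⟨b, hb⟩ := dtc3 hT' (z ≫ biprod.snd) (by
      have := hz =≫ (biprod.snd : A ⊞ A' ⟶ A')⟦(1 : ℤ)⟧'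
      rw [biprod.desc_eq] at this
      simpa [s12, s22] using this)
    exact ⟨biprod.lift a b, by ext <;> simp [ha, hb]⟩
  · intro W z hz
    obtain ⟨a, ha⟩ := dtc1 hT (z ≫ (biprod.fst : A ⊞ A' ⟶ A)⟦(1 : ℤ)⟧') (by
      rw [Category.assoc, ← k3, reassoc_of% hz, zero_comp])
    obtain ⟨b, hb⟩ := dtc1 hT' (z ≫ (biprod.snd : A ⊞ A' ⟶ A')⟦(1 : ℤ)⟧') (by
      rw [Category.assoc, ← k4, reassoc_of% hz, zero_comp])
    refine ⟨biprod.lift a b, ?_⟩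
    rw [biprod.lift_desc, ← reassoc_of% ha, ← reassoc_of% hb, ← Preadditive.comp_add, tot,
      Category.comp_id]
  · intro W x hx
    obtain ⟨a, ha⟩ := dty2 hT (biprod.inl ≫ x) (by simpa using biprod.inl ≫= hx)
    obtain ⟨b, hb⟩ := dty2 hT' (biprod.inr ≫ x) (by simpa using biprod.inr ≫= hx)
    exact ⟨biprod.desc a b, by ext <;> simp [ha, hb]⟩

theorem dist_inl_snd (X Z : C) :
    Triangle.mk (biprod.inl : X ⟶ X ⊞ Z) biprod.snd 0 ∈ distTriang C :=
  binaryBiproductTriangle_distinguished X Z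

theorem cs_add {G : C} {t : ℝ} {X Y Z : C} {r1 r2 : ℝ} (h1 : r1 ∈ complexitySet C G X t)
    (h2 : r2 ∈ complexitySet C G Z t) {x : X ⟶ Y} {y : Y ⟶ Z} {z : Z ⟶ X⟦(1 : ℤ)⟧}
    (hT : Triangle.mk x y z ∈ distTriang C) : r1 + r2 ∈ complexitySet C G Y t := by
  obtain ⟨B1, X', hB1, ⟨e1⟩⟩ := h1
  obtain ⟨B2, Z', hB2, ⟨e2⟩⟩ := h2
  obtain ⟨h'', hT'⟩ := dist_biprod hT (dist_inl_snd X' Z')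
  exact ⟨_, _, bv_add (bv_iso hB1 e1) (bv_iso hB2 e2) hT', ⟨Iso.refl _⟩⟩

theorem cs_iso {G : C} {t : ℝ} {X Y : C} {r : ℝ} (h1 : r ∈ complexitySet C G X t)
    (e : X ≅ Y) : r ∈ complexitySet C G Y t := by
  obtain ⟨B1, X', hB1, ⟨e1⟩⟩ := h1
  exact ⟨B1, X', hB1, ⟨e1 ≪≫ biprod.mapIso e (Iso.refl _)⟩⟩

theorem bv_shift {G : C} {t : ℝ} {B : C} {r : ℝ} (hB : BuildVal C G t B r) (m : ℤ) :
    BuildVal C G t (B⟦m⟧) (r * Real.exp (m * t)) := by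
  induction hB with
  | zero Z hZ => rw [zero_mul]; exact .zero _ ((shiftFunctor C m).map_isZero hZ)
  | step A B n r f g h hT hA ih =>
    obtain ⟨h', hT'⟩ := dist_shift m hT
    have h3 := dtiso3 hT' ((shiftFunctorAdd C n m).app G)
    have := BuildVal.step _ _ _ _ _ _ _ h3 ih
    rw [add_mul, ← Real.exp_add, ← add_mul]
    push_cast at this
    exact this

theorem cs_shift {G : C} {t : ℝ} {X : C} {r : ℝ} (h1 : r ∈ complexitySet C G X t) (m : ℤ) :
    r * Real.exp (m * t) ∈ complexitySet C G (X⟦m⟧) t := by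
  obtain ⟨B1, X', hB1, ⟨e1⟩⟩ := h1
  have := preservesBinaryBiproducts_of_preservesBiproducts (shiftFunctor C m)
  exact ⟨_, X'⟦m⟧, bv_shift hB1 m, ⟨(shiftFunctor C m).mapIso e1 ≪≫
    (shiftFunctor C m).mapBiprod X X'⟩⟩

open ZeroObject in
theorem cs_self (G : C) (t : ℝ) : 1 ∈ complexitySet C G G t := by
  have hT : Triangle.mk (0 : (0 : C) ⟶ G⟦(0 : ℤ)⟧) (𝟙 _) 0 ∈ distTriang C :=
    contractible_distinguished₁ _
  have := BuildVal.step (E := G) (t := t) _ _ _ _ _ _ _ hT (.zero _ (isZero_zero C))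
  refine ⟨G⟦(0 : ℤ)⟧, 0, ?_, ⟨(shiftFunctorZero C ℤ).app G ≪≫ ?_⟩⟩
  · simpa using this
  · exact ⟨biprod.inl, biprod.fst, by simp, by
      apply biprod.hom_ext'
      · simp
      · exact (isZero_zero C).eq_of_src _ _⟩

theorem cs_nonneg {G X : C} {t r : ℝ} (h : r ∈ complexitySet C G X t) : 0 ≤ r := by
  obtain ⟨_, _, h, _⟩ := h
  exact bv_nonneg h

theorem cs_nonempty {G X : C} {s : ℝ} (h : (complexitySet C G X s).Nonempty) (t : ℝ) :
    (complexitySet C G X t).Nonempty := by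
  obtain ⟨_, B, X', h, e⟩ := h
  obtain ⟨r', hr'⟩ := bv_exists (s := t) h
  exact ⟨r', B, X', hr', e⟩

end Part2

section Part3
variable {C}
variable {d : ℕ} (O : PdObject C d)

/-- The shift of a graded endomorphism of `E`. -/
noncomputable def Phi (a n b : ℤ) (hb : n + a = b) (f : O.E ⟶ O.E⟦n⟧) : O.E⟦a⟧ ⟶ O.E⟦b⟧ :=
  f⟦a⟧' ≫ (shiftFunctorAdd' C n a b hb).inv.app O.E

theorem Phi_surj (a n b : ℤ) (hb : n + a = b) (x : O.E⟦a⟧ ⟶ O.E⟦b⟧) :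
    ∃ f, x = Phi O a n b hb f := by
  obtain ⟨f, hf⟩ := (shiftFunctor C a).map_surjective
    (x ≫ (shiftFunctorAdd' C n a b hb).hom.app O.E)
  refine ⟨f, ?_⟩
  rw [Phi, hf, Category.assoc, Iso.hom_inv_id_app, Category.comp_id]

theorem Phi_comp (a n b m c k : ℤ) (hb : n + a = b) (hc : m + b = c) (hk : m + n = k)
    (hk' : k + a = c)
    (f : O.E ⟶ O.E⟦n⟧) (g : O.E ⟶ O.E⟦m⟧) :
    Phi O a n b hb f ≫ Phi O b m c hc g =
      Phi O a k c hk' (ShiftedHom.comp f g hk) := by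
  have h1 := ShiftedHom.comp_assoc (𝟙 (O.E⟦a⟧) : ShiftedHom (O.E⟦a⟧) O.E a) f g hb hk (a := c)
    (by rw [hk, hk'])
  have h2 : ∀ (n b : ℤ) (hb : n + a = b) (f : O.E ⟶ O.E⟦n⟧),
      ShiftedHom.comp (𝟙 (O.E⟦a⟧) : ShiftedHom (O.E⟦a⟧) O.E a) f hb = Phi O a n b hb f := by
    intro n b hb f
    simp [ShiftedHom.comp, Phi]
  rw [h2, h2] at h1
  rw [← h1]
  rfl

theorem Phi_inj0 (a n b : ℤ) (hb : n + a = b) (f : O.E ⟶ O.E⟦n⟧) (hf : f ≠ 0) :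
    Phi O a n b hb f ≠ 0 := by
  intro h
  apply hf
  apply (shiftFunctor C a).map_injective
  rw [Functor.map_zero, ← cancel_mono ((shiftFunctorAdd' C n a b hb).inv.app O.E)]
  rw [zero_comp]
  exact h

theorem hpow_add (p q n : ℕ) (hn : n = p + q) :
    O.hpow n = ShiftedHom.comp (O.hpow p) (O.hpow q)
      (show 2 * (q : ℤ) + 2 * (p : ℤ) = 2 * (n : ℤ) by rw [hn]; push_cast; ring) := by
  induction p generalizing n with
  | zero =>
    obtain rfl : n = q := by omega
    have h0 : O.hpow 0 = ShiftedHom.mk₀ (2 * ((0 : ℕ) : ℤ)) (by simp) (𝟙 O.E) := by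
      rw [O.hpow_zero, ShiftedHom.mk₀, Category.id_comp]
    rw [h0, ShiftedHom.mk₀_id_comp]
  | succ p ih =>
    obtain rfl : n = (p + q) + 1 := by omega
    have hs : ∀ k : ℕ, O.hpow (k + 1) = ShiftedHom.comp O.h (O.hpow k)
      (by push_cast; ring) := O.hpow_succ
    rw [hs, hs, ih (p + q) rfl, ShiftedHom.comp_assoc]
    push_cast; ring

theorem hom_deg {n : ℤ} {f : O.E ⟶ O.E⟦n⟧} (hf : f ≠ 0) :
    ∃ k : ℕ, k ≤ d ∧ n = 2 * (k : ℤ) := by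
  by_contra h
  exact hf (O.hom_rank_zero n h f)

theorem hom_form {k : ℕ} (hk : k ≤ d) (f : O.E ⟶ O.E⟦2 * (k : ℤ)⟧) :
    ∃ c : ℂ, f = c • O.hpow k := by
  obtain ⟨c, hc⟩ := (finrank_eq_one_iff_of_nonzero' _ (O.hpow_ne_zero k hk)).1
    (O.hom_rank_one k hk) f
  exact ⟨c, hc.symm⟩

theorem Phi_scalar (a n b : ℤ) (hb : n + a = b) (c : ℂ) (f : O.E ⟶ O.E⟦n⟧) :
    Phi O a n b hb (c • f) = (c • 𝟙 O.E)⟦a⟧' ≫ Phi O a n b hb f := by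
  rw [Phi, Phi, ← Category.assoc, ← Functor.map_comp, Linear.smul_comp, Category.id_comp]

theorem scalar_move {a b : ℤ} (x : O.E⟦a⟧ ⟶ O.E⟦b⟧) (c : ℂ) :
    ∃ w, (c • 𝟙 O.E)⟦a⟧' ≫ x = x ≫ w := by
  obtain ⟨f, rfl⟩ := Phi_surj O a (b - a) b (by ring) x
  refine ⟨(shiftFunctorAdd' C (b - a) a b (by ring)).hom.app O.E ≫ (c • 𝟙 (O.E⟦b - a⟧))⟦a⟧' ≫
    (shiftFunctorAdd' C (b - a) a b (by ring)).inv.app O.E, ?_⟩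
  rw [← Phi_scalar, Phi, Phi, Category.assoc, Iso.inv_hom_id_app_assoc, ← Category.assoc,
    ← Functor.map_comp, Linear.comp_smul, Category.comp_id]

/-- Normal form of nonzero maps. -/
theorem nform {a b : ℤ} {x : O.E⟦a⟧ ⟶ O.E⟦b⟧} (hx : x ≠ 0) :
    ∃ (k : ℕ) (hb : 2 * (k : ℤ) + a = b) (c : ℂ), k ≤ d ∧ c ≠ 0 ∧
      x = (c • 𝟙 O.E)⟦a⟧' ≫ Phi O a _ b hb (O.hpow k) := by
  obtain ⟨f, rfl⟩ := Phi_surj O a (b - a) b (by ring) x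
  have hf : f ≠ 0 := by
    rintro rfl
    apply hx
    rw [Phi, Functor.map_zero, zero_comp]
  obtain ⟨k, hk, hn⟩ := hom_deg O hf
  have key : ∀ (n : ℤ) (hnb : n + a = b) (f : O.E ⟶ O.E⟦n⟧), f ≠ 0 → n = 2 * (k : ℤ) →
      ∃ (hb : 2 * (k : ℤ) + a = b) (c : ℂ), c ≠ 0 ∧
      Phi O a n b hnb f = (c • 𝟙 O.E)⟦a⟧' ≫ Phi O a _ b hb (O.hpow k) := by
    intro n hnb f hf hn
    subst hn
    obtain ⟨c, rfl⟩ := hom_form O hk f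
    refine ⟨hnb, c, ?_, Phi_scalar O _ _ _ _ _ _⟩
    rintro rfl
    simp at hf
  obtain ⟨hb, c, hc, h⟩ := key _ _ f hf hn
  exact ⟨k, hb, c, hk, hc, h⟩

theorem Ehom_deg {a b : ℤ} {x : O.E⟦a⟧ ⟶ O.E⟦b⟧} (hx : x ≠ 0) :
    ∃ m : ℕ, m ≤ d ∧ b = 2 * (m : ℤ) + a := by
  obtain ⟨k, hb, c, hk, -, -⟩ := nform O hx
  exact ⟨k, hk, hb.symm⟩

theorem Ehom_exists (a b : ℤ) (m : ℕ) (hm : m ≤ d) (hb : b = 2 * (m : ℤ) + a) :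
    ∃ x : O.E⟦a⟧ ⟶ O.E⟦b⟧, x ≠ 0 :=
  ⟨_, Phi_inj0 O a _ b hb.symm _ (O.hpow_ne_zero m hm)⟩

theorem scal_inv (a : ℤ) {c : ℂ} (hc : c ≠ 0) :
    (c⁻¹ • 𝟙 O.E)⟦a⟧' ≫ (c • 𝟙 O.E)⟦a⟧' = 𝟙 _ := by
  rw [← Functor.map_comp, Linear.smul_comp, Category.id_comp, smul_smul, inv_mul_cancel₀ hc,
    one_smul, CategoryTheory.Functor.map_id]

theorem Ehom_left {a a' b : ℤ} (h : a' ≤ a) {u : O.E⟦a⟧ ⟶ O.E⟦b⟧} (hu : u ≠ 0)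
    (x : O.E⟦a'⟧ ⟶ O.E⟦b⟧) : ∃ y, x = y ≫ u := by
  by_cases hx : x = 0
  · exact ⟨0, by rw [hx, zero_comp]⟩
  obtain ⟨k, hb, c, hk, hc, rfl⟩ := nform O hu
  obtain ⟨k', hb', c', hk', hc', rfl⟩ := nform O hx
  obtain ⟨m, hm⟩ : ∃ m, k' = m + k := ⟨k' - k, by omega⟩
  have := Phi_comp O a' (2 * (m : ℤ)) a (2 * (k : ℤ)) b (2 * (k' : ℤ)) (by omega) hb
    (by subst hm; push_cast; ring) hb' (O.hpow m) (O.hpow k)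
  rw [← hpow_add O m k k' hm] at this
  refine ⟨(c' • 𝟙 O.E)⟦a'⟧' ≫ Phi O a' (2 * (m : ℤ)) a (by omega) (O.hpow m) ≫
    (c⁻¹ • 𝟙 O.E)⟦a⟧', ?_⟩
  simp only [Category.assoc]
  rw [reassoc_of% scal_inv O a hc, this]

theorem Ehom_right {a b b' : ℤ} (h : b ≤ b') {u : O.E⟦a⟧ ⟶ O.E⟦b⟧} (hu : u ≠ 0)
    (x : O.E⟦a⟧ ⟶ O.E⟦b'⟧) : ∃ y, x = u ≫ y := by
  by_cases hx : x = 0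
  · exact ⟨0, by rw [hx, comp_zero]⟩
  obtain ⟨k, hb, c, hk, hc, rfl⟩ := nform O hu
  obtain ⟨k', hb', c', hk', hc', rfl⟩ := nform O hx
  obtain ⟨m, hm⟩ : ∃ m, k' = k + m := ⟨k' - k, by omega⟩
  have hm2 : 2 * (m : ℤ) + b = b' := by omega
  have := Phi_comp O a (2 * (k : ℤ)) b (2 * (m : ℤ)) b' (2 * (k' : ℤ)) hb hm2
    (by subst hm; push_cast; ring) hb' (O.hpow k) (O.hpow m)
  rw [← hpow_add O k m k' hm] at this
  obtain ⟨w, hw⟩ := scalar_move O (Phi O a (2 * (k' : ℤ)) b' hb' (O.hpow k')) c'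
  obtain ⟨w2, hw2⟩ := scalar_move O ((c • 𝟙 O.E)⟦a⟧' ≫ Phi O a (2 * (k : ℤ)) b hb (O.hpow k)) c⁻¹
  rw [reassoc_of% scal_inv O a hc] at hw2
  refine ⟨w2 ≫ Phi O b (2 * (m : ℤ)) b' hm2 (O.hpow m) ≫ w, ?_⟩
  rw [hw, ← this]
  conv_lhs => rw [hw2]
  simp only [Category.assoc]

theorem Eendo_iso {a : ℤ} {u : O.E⟦a⟧ ⟶ O.E⟦a⟧} (hu : u ≠ 0) : IsIso u := by
  obtain ⟨y, hy⟩ := Ehom_left O le_rfl hu (𝟙 _)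
  obtain ⟨z, hz⟩ := Ehom_right O le_rfl hu (𝟙 _)
  have : y = z := by
    rw [← Category.comp_id y, hz, ← Category.assoc, ← hy, Category.id_comp]
  exact ⟨y, by rw [this, ← hz], hy.symm⟩

theorem Ehom_unique {a b : ℤ} {u v : O.E⟦a⟧ ⟶ O.E⟦b⟧} (hu : u ≠ 0) (hv : v ≠ 0) :
    ∃ w : O.E⟦b⟧ ≅ O.E⟦b⟧, v = u ≫ w.hom := by
  obtain ⟨w, hw⟩ := Ehom_right O le_rfl hu v
  have : w ≠ 0 := by rintro rfl; rw [comp_zero] at hw; exact hv hw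
  have := Eendo_iso O this
  exact ⟨asIso w, hw⟩

theorem Eid_ne (a : ℤ) : 𝟙 (O.E⟦a⟧) ≠ 0 := by
  intro h
  apply O.nonzero
  rw [IsZero.iff_id_eq_zero]
  apply (shiftFunctor C a).map_injective
  rw [Functor.map_zero, CategoryTheory.Functor.map_id, h]

end Part3

section Part4
variable {C}
variable {d : ℕ} (O : PdObject C d)

/-- A decomposition of `X` as a finite direct sum of shifts of `E`. -/
structure Dec (X : C) (ι : Type) [Fintype ι] (a : ι → ℤ) where
  s : ∀ i, O.E⟦a i⟧ ⟶ X
  p : ∀ i, X ⟶ O.E⟦a i⟧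
  sp : ∀ i, s i ≫ p i = 𝟙 _
  sp0 : ∀ i i', i ≠ i' → s i ≫ p i' = 0
  tot : ∑ i, p i ≫ s i = 𝟙 X

variable {O}
variable {X Y : C} {ι κ : Type} [Fintype ι] [Fintype κ] {a : ι → ℤ} {b : κ → ℤ}

/-- Transport a decomposition along an isomorphism. -/
def Dec.conj (D : Dec O X ι a) (g : X ≅ Y) : Dec O Y ι a where
  s i := D.s i ≫ g.hom
  p i := g.inv ≫ D.p i
  sp i := by simp [D.sp]
  sp0 i i' h := by simp [D.sp0 i i' h]
  tot := by
    have : ∑ i, (g.inv ≫ D.p i) ≫ D.s i ≫ g.hom = g.inv ≫ (∑ i, D.p i ≫ D.s i) ≫ g.hom := by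
      simp [Preadditive.sum_comp, Preadditive.comp_sum]
    rw [this, D.tot]; simp

theorem Dec.hom_ext_src (D : Dec O X ι a) {W : C} {x y : X ⟶ W}
    (h : ∀ i, D.s i ≫ x = D.s i ≫ y) : x = y := by
  rw [← Category.id_comp x, ← Category.id_comp y, ← D.tot, Preadditive.sum_comp,
    Preadditive.sum_comp]
  refine Finset.sum_congr rfl fun i _ => ?_
  rw [Category.assoc, h, Category.assoc]

theorem Dec.hom_ext_tgt (D : Dec O X ι a) {W : C} {x y : W ⟶ X}
    (h : ∀ i, x ≫ D.p i = y ≫ D.p i) : x = y := by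
  rw [← Category.comp_id x, ← Category.comp_id y, ← D.tot, Preadditive.comp_sum,
    Preadditive.comp_sum]
  refine Finset.sum_congr rfl fun i _ => ?_
  rw [← Category.assoc, h, Category.assoc]

theorem Dec.s_comp_sum (D : Dec O X ι a) {W : C} (f : ∀ i, O.E⟦a i⟧ ⟶ W) (i : ι) :
    D.s i ≫ (∑ k, D.p k ≫ f k) = f i := by
  classical
  rw [Preadditive.comp_sum, Finset.sum_eq_single i]
  · rw [← Category.assoc, D.sp, Category.id_comp]
  · intro k _ hk
    rw [← Category.assoc, D.sp0 i k hk.symm, zero_comp]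
  · simp

theorem Dec.sum_comp_p (D : Dec O X ι a) {W : C} (f : ∀ i, W ⟶ O.E⟦a i⟧) (i : ι) :
    (∑ k, f k ≫ D.s k) ≫ D.p i = f i := by
  classical
  rw [Preadditive.sum_comp, Finset.sum_eq_single i]
  · rw [Category.assoc, D.sp, Category.comp_id]
  · intro k _ hk
    rw [Category.assoc, D.sp0 k i hk, comp_zero]
  · simp

/-- The matrix of `θ` is a partial permutation matrix. -/
def PP (DX : Dec O X ι a) (DY : Dec O Y κ b) (θ : X ⟶ Y) : Prop :=
  (∀ i j j', DX.s i ≫ θ ≫ DY.p j ≠ 0 → DX.s i ≫ θ ≫ DY.p j' ≠ 0 → j = j') ∧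
  (∀ i i' j, DX.s i ≫ θ ≫ DY.p j ≠ 0 → DX.s i' ≫ θ ≫ DY.p j ≠ 0 → i = i')

theorem unip {X : C} (N : X ⟶ X) (hN : N ≫ N = 0) : ∃ g : X ≅ X, g.hom = 𝟙 X - N :=
  ⟨⟨𝟙 X - N, 𝟙 X + N, by simp [hN], by simp [hN]⟩, rfl⟩

theorem diag_aux (DX : Dec O X ι a) (DY : Dec O Y κ b) (n : ℕ) :
    ∀ (θ : X ⟶ Y) (I : Finset ι) (J : Finset κ),
      (∀ i j, i ∈ I → j ∉ J → DX.s i ≫ θ ≫ DY.p j = 0) →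
      (∀ i j, i ∉ I → j ∈ J → DX.s i ≫ θ ≫ DY.p j = 0) →
      (∀ i j j', i ∈ I → DX.s i ≫ θ ≫ DY.p j ≠ 0 → DX.s i ≫ θ ≫ DY.p j' ≠ 0 → j = j') →
      (∀ i i' j, j ∈ J → DX.s i ≫ θ ≫ DY.p j ≠ 0 → DX.s i' ≫ θ ≫ DY.p j ≠ 0 → i = i') →
      Fintype.card ι ≤ I.card + n →
      ∃ (g : X ≅ X) (g' : Y ≅ Y), PP DX DY (g.hom ≫ θ ≫ g'.hom) := by
  classical
  induction n with
  | zero =>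
    intro θ I J h1 h2 h3 h4 h5
    have hI : I = Finset.univ := by
      apply Finset.eq_univ_of_card
      exact le_antisymm (Finset.card_le_univ I) (by simpa using h5)
    subst hI
    refine ⟨Iso.refl _, Iso.refl _, ?_⟩
    simp only [Iso.refl_hom, Category.id_comp, Category.comp_id]
    refine ⟨fun i j j' => h3 i j j' (Finset.mem_univ _), fun i i' j hi hi' => ?_⟩
    by_cases hj : j ∈ J
    · exact h4 i i' j hj hi hi'
    · exact absurd (h1 i j (Finset.mem_univ _) hj) hi
  | succ n ih =>
    intro θ I J h1 h2 h3 h4 h5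
    by_cases hz : ∀ i j, i ∉ I → j ∉ J → DX.s i ≫ θ ≫ DY.p j = 0
    · refine ⟨Iso.refl _, Iso.refl _, ?_⟩
      simp only [Iso.refl_hom, Category.id_comp, Category.comp_id]
      refine ⟨fun i j j' hj hj' => ?_, fun i i' j hi hi' => ?_⟩
      · by_cases hi : i ∈ I
        · exact h3 i j j' hi hj hj'
        · by_cases hjJ : j ∈ J
          · exact absurd (h2 i j hi hjJ) hj
          · exact absurd (hz i j hi hjJ) hj
      · by_cases hj : j ∈ J
        · exact h4 i i' j hj hi hi'
        · by_cases hiI : i ∈ I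
          · exact absurd (h1 i j hiI hj) hi
          · exact absurd (hz i j hiI hj) hi
    · push Not at hz
      let S : Finset (ι × κ) := Finset.univ.filter
        (fun q => q.1 ∉ I ∧ q.2 ∉ J ∧ DX.s q.1 ≫ θ ≫ DY.p q.2 ≠ 0)
      have hS : S.Nonempty := by
        obtain ⟨i, j, hi, hj, hij⟩ := hz
        exact ⟨(i, j), by simp [S, hi, hj, hij]⟩
      obtain ⟨⟨i0, j0⟩, hq, hmin⟩ := Finset.exists_min_image S (fun q => b q.2 - a q.1) hS
      obtain ⟨hi0, hj0, hu⟩ : i0 ∉ I ∧ j0 ∉ J ∧ DX.s i0 ≫ θ ≫ DY.p j0 ≠ 0 := by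
        simpa [S] using hq
      have hmin' : ∀ i j, i ∉ I → j ∉ J → DX.s i ≫ θ ≫ DY.p j ≠ 0 →
          b j0 - a i0 ≤ b j - a i := by
        intro i j hi hj hij
        exact hmin (i, j) (by simp [S, hi, hj, hij])
      have hc : ∀ i, ∃ c : O.E⟦a i⟧ ⟶ O.E⟦a i0⟧,
          (i ≠ i0 → DX.s i ≫ θ ≫ DY.p j0 = c ≫ DX.s i0 ≫ θ ≫ DY.p j0) ∧
          ((i = i0 ∨ DX.s i ≫ θ ≫ DY.p j0 = 0) → c = 0) := by
        intro i
        by_cases hi : i = i0 ∨ DX.s i ≫ θ ≫ DY.p j0 = 0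
        · refine ⟨0, fun hne => ?_, fun _ => rfl⟩
          rw [zero_comp]; exact hi.resolve_left hne
        · push Not at hi
          have hiI : i ∉ I := fun h => hi.2 (h1 i j0 h hj0)
          have := hmin' i j0 hiI hj0 hi.2
          obtain ⟨c, hc⟩ := Ehom_left O (a' := a i) (by linarith) hu (DX.s i ≫ θ ≫ DY.p j0)
          exact ⟨c, fun _ => hc, fun h => absurd h (by push Not; exact hi)⟩
      have he : ∀ j, ∃ e : O.E⟦b j0⟧ ⟶ O.E⟦b j⟧,
          (j ≠ j0 → DX.s i0 ≫ θ ≫ DY.p j = (DX.s i0 ≫ θ ≫ DY.p j0) ≫ e) ∧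
          ((j = j0 ∨ DX.s i0 ≫ θ ≫ DY.p j = 0) → e = 0) := by
        intro j
        by_cases hj : j = j0 ∨ DX.s i0 ≫ θ ≫ DY.p j = 0
        · refine ⟨0, fun hne => ?_, fun _ => rfl⟩
          rw [comp_zero]; exact hj.resolve_left hne
        · push Not at hj
          have hjJ : j ∉ J := fun h => hj.2 (h2 i0 j hi0 h)
          have := hmin' i0 j hi0 hjJ hj.2
          obtain ⟨c, hc⟩ := Ehom_right O (b' := b j) (by linarith) hu (DX.s i0 ≫ θ ≫ DY.p j)
          exact ⟨c, fun _ => hc, fun h => absurd h (by push Not; exact hj)⟩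
      choose c hc1 hc2 using hc
      choose e he1 he2 using he
      obtain ⟨N, hN⟩ : ∃ N : X ⟶ X, N = ∑ k, DX.p k ≫ c k ≫ DX.s i0 := ⟨_, rfl⟩
      obtain ⟨N', hN'⟩ : ∃ N' : Y ⟶ Y, N' = ∑ k, (DY.p j0 ≫ e k) ≫ DY.s k := ⟨_, rfl⟩
      have sN : ∀ i, DX.s i ≫ N = c i ≫ DX.s i0 := fun i => by rw [hN]; exact DX.s_comp_sum _ i
      have Np : ∀ j, N' ≫ DY.p j = DY.p j0 ≫ e j := fun j => by rw [hN']; exact DY.sum_comp_p _ j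
      have NN : N ≫ N = 0 := DX.hom_ext_src fun i => by
        rw [← Category.assoc, sN, Category.assoc, sN, hc2 i0 (Or.inl rfl)]; simp
      have NN' : N' ≫ N' = 0 := DY.hom_ext_tgt fun j => by
        rw [Category.assoc, Np, ← Category.assoc, Np, he2 j0 (Or.inl rfl)]; simp
      obtain ⟨g, hg⟩ := unip N NN
      obtain ⟨g', hg'⟩ := unip N' NN'
      have ent : ∀ i j, DX.s i ≫ (g.hom ≫ θ ≫ g'.hom) ≫ DY.p j =
          DX.s i ≫ θ ≫ DY.p j - c i ≫ DX.s i0 ≫ θ ≫ DY.p j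
          - (DX.s i ≫ θ ≫ DY.p j0 - c i ≫ DX.s i0 ≫ θ ≫ DY.p j0) ≫ e j := by
        intro i j
        have e1 : DX.s i ≫ g.hom = DX.s i - c i ≫ DX.s i0 := by
          rw [hg, Preadditive.comp_sub, sN, Category.comp_id]
        have e2 : g'.hom ≫ DY.p j = DY.p j - DY.p j0 ≫ e j := by
          rw [hg', Preadditive.sub_comp, Np, Category.id_comp]
        simp only [Category.assoc]
        rw [e2, ← Category.assoc, e1]
        simp only [Preadditive.comp_sub, Preadditive.sub_comp, Category.assoc]
      have ent0 : ∀ i, i ≠ i0 → ∀ j, DX.s i ≫ (g.hom ≫ θ ≫ g'.hom) ≫ DY.p j =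
          DX.s i ≫ θ ≫ DY.p j - c i ≫ DX.s i0 ≫ θ ≫ DY.p j := by
        intro i hi j
        rw [ent, ← hc1 i hi]; simp
      have entp : ∀ j, j ≠ j0 → DX.s i0 ≫ (g.hom ≫ θ ≫ g'.hom) ≫ DY.p j = 0 := by
        intro j hj
        rw [ent, hc2 i0 (Or.inl rfl), he1 j hj]
        simp
      have entq : ∀ i, i ≠ i0 → DX.s i ≫ (g.hom ≫ θ ≫ g'.hom) ≫ DY.p j0 = 0 := by
        intro i hi
        rw [ent0 i hi, ← hc1 i hi, sub_self]
      have entI : ∀ i, i ∈ I → ∀ j, DX.s i ≫ (g.hom ≫ θ ≫ g'.hom) ≫ DY.p j =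
          DX.s i ≫ θ ≫ DY.p j := by
        intro i hi j
        rw [ent0 i (by rintro rfl; exact hi0 hi), hc2 i (Or.inr (h1 i j0 hi hj0))]; simp
      have entJ : ∀ i j, j ∈ J → DX.s i ≫ (g.hom ≫ θ ≫ g'.hom) ≫ DY.p j =
          DX.s i ≫ θ ≫ DY.p j := by
        intro i j hj
        rw [ent, h2 i0 j hi0 hj, he2 j (Or.inr (h2 i0 j hi0 hj))]; simp
      clear_value S
      generalize hθ' : g.hom ≫ θ ≫ g'.hom = θ' at *
      have fin : (∃ (f : X ≅ X) (f' : Y ≅ Y), PP DX DY (f.hom ≫ θ' ≫ f'.hom)) →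
          ∃ (g : X ≅ X) (g' : Y ≅ Y), PP DX DY (g.hom ≫ θ ≫ g'.hom) := by
        rintro ⟨f, f', hPP⟩
        refine ⟨f ≪≫ g, g' ≪≫ f', ?_⟩
        rw [← hθ'] at hPP
        simpa using hPP
      refine fin (ih θ' (insert i0 I) (insert j0 J) ?_ ?_ ?_ ?_ ?_)
      · intro i j hi hj
        rw [Finset.mem_insert, not_or] at hj
        rcases Finset.mem_insert.1 hi with rfl | hi
        · exact entp j hj.1
        · rw [entI i hi, h1 i j hi hj.2]
      · intro i j hi hj
        rw [Finset.mem_insert, not_or] at hi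
        rcases Finset.mem_insert.1 hj with rfl | hj
        · exact entq i hi.1
        · rw [entJ i j hj, h2 i j hi.2 hj]
      · intro i j j' hi hj hj'
        rcases Finset.mem_insert.1 hi with rfl | hi
        · by_cases h : j = j0
          · by_cases h' : j' = j0
            · rw [h, h']
            · exact absurd (entp j' h') hj'
          · exact absurd (entp j h) hj
        · rw [entI i hi] at hj hj'
          exact h3 i j j' hi hj hj'
      · intro i i' j hj hi hi'
        rcases Finset.mem_insert.1 hj with rfl | hj
        · by_cases h : i = i0
          · by_cases h' : i' = i0
            · rw [h, h']
            · exact absurd (entq i' h') hi'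
          · exact absurd (entq i h) hi
        · rw [entJ i j hj] at hi
          rw [entJ i' j hj] at hi'
          exact h4 i i' j hj hi hi'
      · rw [Finset.card_insert_of_notMem hi0]; omega

theorem Dec.diag (DX : Dec O X ι a) (DY : Dec O Y κ b) (θ : X ⟶ Y) :
    ∃ (DX' : Dec O X ι a) (DY' : Dec O Y κ b), PP DX' DY' θ := by
  obtain ⟨g, g', h⟩ := diag_aux DX DY (Fintype.card ι) θ ∅ ∅ (by simp) (by simp) (by simp)
    (by simp) (by simp)
  refine ⟨DX.conj g, DY.conj g'.symm, ?_⟩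
  simpa [PP, Dec.conj] using h

theorem PP.row {DX : Dec O X ι a} {DY : Dec O Y κ b} {θ : X ⟶ Y} (h : PP DX DY θ)
    {i : ι} {j : κ} (hij : DX.s i ≫ θ ≫ DY.p j ≠ 0) :
    DX.s i ≫ θ = (DX.s i ≫ θ ≫ DY.p j) ≫ DY.s j := by
  apply DY.hom_ext_tgt
  intro j'
  by_cases hj : j = j'
  · subst hj
    simp [DY.sp]
  · rw [Category.assoc, Category.assoc, DY.sp0 j j' hj, comp_zero]
    by_contra hne
    exact hj (h.1 i j j' hij hne)

theorem PP.col {DX : Dec O X ι a} {DY : Dec O Y κ b} {θ : X ⟶ Y} (h : PP DX DY θ)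
    {i : ι} {j : κ} (hij : DX.s i ≫ θ ≫ DY.p j ≠ 0) :
    θ ≫ DY.p j = DX.p i ≫ (DX.s i ≫ θ ≫ DY.p j) := by
  apply DX.hom_ext_src
  intro i'
  by_cases hi : i = i'
  · subst hi
    rw [← Category.assoc (DX.s i) (DX.p i), DX.sp, Category.id_comp]
  · rw [← Category.assoc (DX.s i') (DX.p i), DX.sp0 i' i (Ne.symm hi), zero_comp]
    by_contra hne
    exact hi (h.2 i i' j hij hne)

theorem PP.dichotomy {DX : Dec O X ι a} {DY : Dec O Y κ b} {θ : X ⟶ Y} (h : PP DX DY θ)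
    (hcard : Fintype.card ι = Fintype.card κ) :
    (∃ i, DX.s i ≫ θ = 0) ∨ ∀ j, ∃ i, DX.s i ≫ θ ≫ DY.p j ≠ 0 := by
  by_cases hr : ∃ i, DX.s i ≫ θ = 0
  · exact Or.inl hr
  right
  push Not at hr
  have : ∀ i, ∃ j, DX.s i ≫ θ ≫ DY.p j ≠ 0 := by
    intro i
    by_contra hne
    push Not at hne
    exact hr i (DY.hom_ext_tgt fun j => by rw [Category.assoc, hne j, zero_comp])
  choose φ hφ using this
  have inj : Function.Injective φ := fun i i' hii => h.2 i i' (φ i) (hφ i) (by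
    rw [hii]; exact hφ i')
  have bij := (Fintype.bijective_iff_injective_and_card φ).2 ⟨inj, hcard⟩
  intro j
  obtain ⟨i, rfl⟩ := bij.2 j
  exact ⟨i, hφ i⟩

/-- The decomposition coming from a biproduct. -/
theorem Dec.ofIso {k : ℕ} {ns : Fin k → ℤ}
    (e : X ≅ biproduct (fun i => (shiftFunctor C (ns i)).obj O.E)) :
    Nonempty (Dec O X (Fin k) ns) :=
  ⟨{ s := fun i => biproduct.ι (fun i => (shiftFunctor C (ns i)).obj O.E) i ≫ e.inv
     p := fun i => e.hom ≫ biproduct.π (fun i => (shiftFunctor C (ns i)).obj O.E) i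
     sp := fun i => by simp
     sp0 := fun i i' h => by simp [biproduct.ι_π_ne _ h]
     tot := by
      have : ∑ i, (e.hom ≫ biproduct.π (fun i => (shiftFunctor C (ns i)).obj O.E) i) ≫
        biproduct.ι (fun i => (shiftFunctor C (ns i)).obj O.E) i ≫ e.inv =
        e.hom ≫ (∑ i, biproduct.π (fun i => (shiftFunctor C (ns i)).obj O.E) i ≫
          biproduct.ι (fun i => (shiftFunctor C (ns i)).obj O.E) i) ≫ e.inv := by
        simp only [Preadditive.sum_comp, Preadditive.comp_sum, Category.assoc]
      rw [this, biproduct.total]; simp }⟩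

/-- Shift of a decomposition. -/
theorem Dec.shift (D : Dec O X ι a) (m : ℤ) (a' : ι → ℤ) (ha' : ∀ i, a i + m = a' i) :
    Nonempty (Dec O (X⟦m⟧) ι a') :=
  ⟨{ s := fun i => (shiftFunctorAdd' C (a i) m (a' i) (ha' i)).hom.app O.E ≫ (D.s i)⟦m⟧'
     p := fun i => (D.p i)⟦m⟧' ≫ (shiftFunctorAdd' C (a i) m (a' i) (ha' i)).inv.app O.E
     sp := fun i => by
      rw [Category.assoc, ← Category.assoc ((D.s i)⟦m⟧'), ← Functor.map_comp, D.sp,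
        CategoryTheory.Functor.map_id, Category.id_comp, Iso.hom_inv_id_app]
     sp0 := fun i i' h => by
      rw [Category.assoc, ← Category.assoc ((D.s i)⟦m⟧'), ← Functor.map_comp, D.sp0 i i' h,
        Functor.map_zero, zero_comp, comp_zero]
     tot := by
      rw [← CategoryTheory.Functor.map_id, ← D.tot, Functor.map_sum]
      refine Finset.sum_congr rfl fun i _ => ?_
      rw [Category.assoc, Iso.inv_hom_id_app_assoc, Functor.map_comp] }⟩

end Part4

section Part6
variable {C}

/-- `X` is isomorphic to `E⟦a⟧`. -/
def IsE {d : ℕ} (O : PdObject C d) (X : C) (a : ℤ) : Prop := Nonempty (X ≅ O.E⟦a⟧)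

section
variable {d : ℕ} {O : PdObject C d}

theorem IsE.refl (a : ℤ) : IsE O (O.E⟦a⟧) a := ⟨Iso.refl _⟩

theorem IsE.base : IsE O O.E 0 := ⟨(shiftFunctorZero C ℤ).symm.app O.E⟩

theorem IsE.shift {X : C} {a : ℤ} (h : IsE O X a) (n b : ℤ) (hb : a + n = b) :
    IsE O (X⟦n⟧) b := by
  obtain ⟨e⟩ := h
  exact ⟨(shiftFunctor C n).mapIso e ≪≫ (shiftFunctorAdd' C a n b hb).symm.app O.E⟩

theorem IsE.deg {X Y : C} {a b : ℤ} (hX : IsE O X a) (hY : IsE O Y b) {x : X ⟶ Y} (hx : x ≠ 0) :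
    ∃ m : ℕ, m ≤ d ∧ b = 2 * (m : ℤ) + a := by
  obtain ⟨e⟩ := hX
  obtain ⟨e'⟩ := hY
  refine Ehom_deg O (x := e.inv ≫ x ≫ e'.hom) fun h => hx ?_
  have : x = e.hom ≫ (e.inv ≫ x ≫ e'.hom) ≫ e'.inv := by simp
  rw [this, h]; simp

theorem IsE.endo {X : C} {a : ℤ} (hX : IsE O X a) {x : X ⟶ X} (hx : x ≠ 0) : IsIso x := by
  obtain ⟨e⟩ := hX
  have h1 : x = e.hom ≫ (e.inv ≫ x ≫ e.hom) ≫ e.inv := by simp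
  have : IsIso (e.inv ≫ x ≫ e.hom) := Eendo_iso O fun h => hx (by rw [h1, h]; simp)
  rw [h1]; infer_instance

theorem IsE.isIso {X Y : C} {a : ℤ} (hX : IsE O X a) (hY : IsE O Y a) {x : X ⟶ Y} (hx : x ≠ 0) :
    IsIso x := by
  obtain ⟨e⟩ := hX
  obtain ⟨e'⟩ := hY
  have h1 : x = e.hom ≫ (e.inv ≫ x ≫ e'.hom) ≫ e'.inv := by simp
  have : IsIso (e.inv ≫ x ≫ e'.hom) := Eendo_iso O fun h => hx (by rw [h1, h]; simp)
  rw [h1]; infer_instance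

end

theorem shift_lift {A B X : C} {f : A ⟶ B} {g : B ⟶ X} {h : X ⟶ A⟦(1 : ℤ)⟧}
    (hT : Triangle.mk f g h ∈ distTriang C) {W : C} (x : W ⟶ A⟦(1 : ℤ)⟧⟦(1 : ℤ)⟧)
    (hx : x ≫ f⟦(1 : ℤ)⟧'⟦(1 : ℤ)⟧' = 0) : ∃ y : W ⟶ X⟦(1 : ℤ)⟧, x = y ≫ h⟦(1 : ℤ)⟧' := by
  have h3 := dtrot (dtrot (dtrot hT))
  obtain ⟨y, hy⟩ := dtc1 h3 x (by
    rw [Functor.map_neg, Preadditive.comp_neg, hx, neg_zero])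
  exact ⟨-y, by rw [hy]; simp⟩

theorem shift_lift2 {A B X : C} {f : A ⟶ B} {g : B ⟶ X} {h : X ⟶ A⟦(1 : ℤ)⟧}
    (hT : Triangle.mk f g h ∈ distTriang C) {W : C} (x : W ⟶ X⟦(1 : ℤ)⟧)
    (hx : x ≫ h⟦(1 : ℤ)⟧' = 0) : ∃ y : W ⟶ B⟦(1 : ℤ)⟧, x = y ≫ g⟦(1 : ℤ)⟧' := by
  have h3 := dtrot (dtrot (dtrot hT))
  obtain ⟨y, hy⟩ := dtc3 h3 x (by rw [Preadditive.comp_neg, hx, neg_zero])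
  exact ⟨-y, by rw [hy]; simp⟩

/-- The cone of a retract of a morphism is a retract of the cone. -/
theorem cone_retract {A B X A' B' X' : C} {f : A ⟶ B} {g : B ⟶ X} {h : X ⟶ A⟦(1 : ℤ)⟧}
    {f' : A' ⟶ B'} {g' : B' ⟶ X'} {h' : X' ⟶ A'⟦(1 : ℤ)⟧}
    (hT : Triangle.mk f g h ∈ distTriang C) (hT' : Triangle.mk f' g' h' ∈ distTriang C)
    (a : A ⟶ A') (b : B ⟶ B') (hab : f ≫ b = a ≫ f')
    (a' : A' ⟶ A) (b' : B' ⟶ B) (hab' : f' ≫ b' = a' ≫ f)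
    (ha : a ≫ a' = 𝟙 _) (hb : b ≫ b' = 𝟙 _) :
    ∃ (c : X ⟶ X') (c' : X' ⟶ X), c ≫ c' = 𝟙 _ := by
  obtain ⟨c, hc1, hc2⟩ := dttr3 hT hT' a b hab
  obtain ⟨c', hc1', hc2'⟩ := dttr3 hT' hT a' b' hab'
  have k1 : g ≫ (c ≫ c') = g := by
    rw [reassoc_of% hc1, hc1', reassoc_of% hb]
  have k2 : (c ≫ c') ≫ h = h := by
    rw [Category.assoc, ← hc2', ← Category.assoc, ← hc2, Category.assoc, ← Functor.map_comp, ha,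
      CategoryTheory.Functor.map_id, Category.comp_id]
  let φ : Triangle.mk f g h ⟶ Triangle.mk f g h :=
    { hom₁ := 𝟙 _, hom₂ := 𝟙 _, hom₃ := c ≫ c'
      comm₁ := by
        show f ≫ 𝟙 B = 𝟙 A ≫ f
        simp
      comm₂ := by
        show g ≫ (c ≫ c') = 𝟙 _ ≫ g
        rw [k1, Category.id_comp]
      comm₃ := by
        show h ≫ (𝟙 A)⟦(1 : ℤ)⟧' = (c ≫ c') ≫ h
        rw [k2]; simp }
  have h1 : IsIso φ.hom₁ := by show IsIso (𝟙 A); infer_instance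
  have h2 : IsIso φ.hom₂ := by show IsIso (𝟙 B); infer_instance
  have h3 : IsIso φ.hom₃ := isIso₃_of_isIso₁₂ φ hT hT h1 h2
  have h4 : IsIso (c ≫ c') := h3
  exact ⟨c, c' ≫ inv (c ≫ c'), by rw [← Category.assoc, IsIso.hom_inv_id]⟩

/-- The cones of isomorphic morphisms are isomorphic. -/
theorem cone_iso {A B X A' B' X' : C} {f : A ⟶ B} {g : B ⟶ X} {h : X ⟶ A⟦(1 : ℤ)⟧}
    {f' : A' ⟶ B'} {g' : B' ⟶ X'} {h' : X' ⟶ A'⟦(1 : ℤ)⟧}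
    (hT : Triangle.mk f g h ∈ distTriang C) (hT' : Triangle.mk f' g' h' ∈ distTriang C)
    (a : A ≅ A') (b : B ≅ B') (hab : f ≫ b.hom = a.hom ≫ f') : Nonempty (X ≅ X') := by
  obtain ⟨c, hc1, hc2⟩ := dttr3 hT hT' a.hom b.hom hab
  let φ : Triangle.mk f g h ⟶ Triangle.mk f' g' h' :=
    { hom₁ := a.hom, hom₂ := b.hom, hom₃ := c
      comm₁ := hab
      comm₂ := hc1
      comm₃ := hc2 }
  have h1 : IsIso φ.hom₁ := by show IsIso a.hom; infer_instance
  have h2 : IsIso φ.hom₂ := by show IsIso b.hom; infer_instance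
  have h3 : IsIso φ.hom₃ := isIso₃_of_isIso₁₂ φ hT hT' h1 h2
  have h4 : IsIso c := h3
  exact ⟨asIso c⟩

variable {d : ℕ} (tw : PdTwist C d)

theorem P_additive : tw.P.functor.Additive := Functor.additive_of_preserves_binary_products _

theorem PE_retract {Q : C} (i : Q ⟶ tw.P.functor.obj tw.E) (r : tw.P.functor.obj tw.E ⟶ Q)
    (hir : i ≫ r = 𝟙 Q) (hQ : 𝟙 Q ≠ 0) : Nonempty (tw.P.functor.obj tw.E ≅ Q) := by
  have := P_additive tw
  have he : r ≫ i ≠ 0 := by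
    intro h
    apply hQ
    have : 𝟙 Q = i ≫ (r ≫ i) ≫ r := by simp [hir]
    rw [this, h]; simp
  obtain ⟨e', he'⟩ := tw.P.functor.map_surjective (r ≫ i)
  have hne : e' ≠ 0 := by
    rintro rfl
    rw [Functor.map_zero] at he'
    exact he he'.symm
  have := (IsE.base (O := tw.toPdObject)).endo hne
  have hiso : IsIso (r ≫ i) := by rw [← he']; infer_instance
  have hid : r ≫ i = 𝟙 _ := by
    rw [← cancel_mono (r ≫ i)]
    simp [reassoc_of% hir]
  exact ⟨⟨r, i, hid, hir⟩⟩

theorem PE_iso : IsE tw.toPdObject (tw.P.functor.obj tw.E) (-2 * (d : ℤ)) := by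
  classical
  obtain ⟨k, ns, ⟨e⟩, hcard⟩ := tw.H_iso tw.E
  have ns_form : ∀ i, ∃ m : ℕ, m ≤ d ∧ ns i = - (2 * (m : ℤ)) := by
    intro i
    by_contra hcon
    have hz := tw.hom_rank_zero (-ns i) (by
      rintro ⟨m, hm, hm'⟩
      exact hcon ⟨m, hm, by linarith⟩)
    have h0 : Module.finrank ℂ (tw.E ⟶ (shiftFunctor C (-ns i)).obj tw.E) = 0 := by
      have : Subsingleton (tw.E ⟶ (shiftFunctor C (-ns i)).obj tw.E) :=
        ⟨fun x y => by rw [hz x, hz y]⟩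
      exact Module.finrank_zero_of_subsingleton
    rw [← hcard, Finset.card_eq_zero] at h0
    have : i ∈ (Finset.univ.filter fun i' => ns i' = - (-ns i)) := by simp
    rw [h0] at this
    simp at this
  have ns_ex : ∀ m : ℕ, m ≤ d → ∃ i, ns i = - (2 * (m : ℤ)) := by
    intro m hm
    have h1 := tw.hom_rank_one m hm
    rw [← hcard] at h1
    obtain ⟨i, hi⟩ := Finset.card_pos.1 (by rw [h1]; exact one_pos)
    exact ⟨i, by simpa using hi⟩
  obtain ⟨DY0⟩ := Dec.ofIso (O := tw.toPdObject) e
  obtain ⟨DX0⟩ := DY0.shift (-2) (fun i => ns i - 2) (fun i => by ring)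
  obtain ⟨DX, DY, hPP⟩ := DX0.diag DY0 (tw.θ tw.E)
  have hin := tw.innerTri tw.E
  have hout := tw.outerTri tw.E
  have hE1 : IsE tw.toPdObject (tw.E⟦(1 : ℤ)⟧) 1 := IsE.base.shift 1 1 (by ring)
  have hS : ∀ a : ℤ, IsE tw.toPdObject (tw.E⟦a⟧⟦(1 : ℤ)⟧⟦(1 : ℤ)⟧) (a + 2) := fun a =>
    ((IsE.refl a).shift 1 (a + 1) rfl).shift 1 (a + 2) (by ring)
  -- a nonzero map into `P E`
  obtain ⟨z0, hz0⟩ : ∃ z0 : tw.E⟦-4 * (d : ℤ) - 2⟧⟦(1 : ℤ)⟧⟦(1 : ℤ)⟧ ⟶ tw.P.functor.obj tw.E,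
      z0 ≠ 0 := by
    obtain ⟨j, hj⟩ := ns_ex d le_rfl
    obtain ⟨u, hu⟩ := Ehom_exists tw.toPdObject (-4 * (d : ℤ) - 2) (ns j - 2) d le_rfl
      (by rw [hj]; ring)
    have hus : u ≫ DX.s j ≠ 0 := by
      intro h
      apply hu
      rw [← Category.comp_id u, ← DX.sp j, reassoc_of% h, zero_comp]
    have hθ : (u ≫ DX.s j) ≫ tw.θ tw.E = 0 := by
      apply DY.hom_ext_tgt
      intro i
      rw [zero_comp]
      by_contra hne
      obtain ⟨m, hm, hm'⟩ := Ehom_deg tw.toPdObject hne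
      obtain ⟨m1, hm1, hm1'⟩ := ns_form i
      omega
    obtain ⟨y, hy⟩ := shift_lift hin ((u ≫ DX.s j)⟦(1 : ℤ)⟧'⟦(1 : ℤ)⟧') (by
      rw [← Functor.map_comp, ← Functor.map_comp, hθ, Functor.map_zero, Functor.map_zero])
    obtain ⟨z, hz⟩ := dtc1 hout y (by
      by_contra hne
      obtain ⟨m, hm, hm'⟩ := (hS _).deg hE1 hne
      omega)
    refine ⟨z, ?_⟩
    rintro rfl
    apply hus
    rw [zero_comp] at hz
    rw [hz, zero_comp] at hy
    apply (shiftFunctor C (1 : ℤ)).map_injective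
    apply (shiftFunctor C (1 : ℤ)).map_injective
    rw [hy]; simp
  rcases hPP.dichotomy rfl with ⟨i, hi⟩ | hall
  · obtain ⟨y, hy⟩ := shift_lift hin ((DX.s i)⟦(1 : ℤ)⟧'⟦(1 : ℤ)⟧') (by
      rw [← Functor.map_comp, ← Functor.map_comp, hi, Functor.map_zero, Functor.map_zero])
    obtain ⟨mi, hmi, hmi'⟩ := ns_form i
    obtain ⟨z, hz⟩ := dtc1 hout y (by
      by_contra hne
      obtain ⟨m, hm, hm'⟩ := (hS _).deg hE1 hne
      omega)
    obtain ⟨w⟩ := PE_retract tw z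
      (tw.dl tw.E ≫ (tw.π tw.E)⟦(1 : ℤ)⟧' ≫ (DX.p i)⟦(1 : ℤ)⟧'⟦(1 : ℤ)⟧') (by
        rw [← reassoc_of% hz, ← reassoc_of% hy, ← Functor.map_comp, ← Functor.map_comp, DX.sp]
        simp) (by
        intro h
        apply Eid_ne tw.toPdObject (ns i - 2)
        apply (shiftFunctor C (1 : ℤ)).map_injective
        apply (shiftFunctor C (1 : ℤ)).map_injective
        simpa using h)
    have hne : z0 ≫ w.hom ≠ 0 := by
      intro h
      apply hz0
      rw [← cancel_mono w.hom, h, zero_comp]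
    obtain ⟨m, hm, hm'⟩ := (hS _).deg (hS _) hne
    have e1 : ns i - 2 + 2 = -2 * (d : ℤ) := by omega
    obtain ⟨w'⟩ := hS (ns i - 2)
    rw [e1] at w'
    exact ⟨w ≪≫ w'⟩
  · exfalso
    obtain ⟨j, hj⟩ := ns_ex 0 (Nat.zero_le _)
    have hj0 : ns j = 0 := by simpa using hj
    obtain ⟨i, hij⟩ := hall j
    obtain ⟨u, hu⟩ : ∃ u, u = DX.s i ≫ tw.θ tw.E ≫ DY.p j := ⟨_, rfl⟩
    have hrow := hPP.row hij
    have hcol := hPP.col hij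
    rw [← hu] at hij hrow hcol
    obtain ⟨mu, hmu, hmu'⟩ := Ehom_deg tw.toPdObject hij
    obtain ⟨mi, hmi, hmi'⟩ := ns_form i
    have hEj : IsE tw.toPdObject (tw.E⟦ns j⟧) 0 := by rw [← hj0]; exact IsE.refl _
    have hEi1 : IsE tw.toPdObject (tw.E⟦ns i - 2⟧⟦(1 : ℤ)⟧) (ns i - 1) :=
      (IsE.refl _).shift 1 _ (by ring)
    obtain ⟨Z, v, w, hZ⟩ := distinguished_cocone_triangle u
    obtain ⟨c, c', hcc⟩ := cone_retract hZ hin (DX.s i) (DY.s j) hrow.symm (DX.p i) (DY.p j) hcol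
      (DX.sp i) (DY.sp j)
    have hv : v ≠ 0 := by
      intro hv
      obtain ⟨y, hy⟩ := dtc2 hZ (𝟙 _) (by rw [hv, comp_zero])
      apply Eid_ne tw.toPdObject (ns j)
      rw [hy]
      by_contra hne
      obtain ⟨m, hm, hm'⟩ := Ehom_deg tw.toPdObject (x := y) (by
        rintro rfl
        exact hne zero_comp)
      omega
    have hZE : ∀ x : Z ⟶ tw.E, x = 0 := by
      intro x
      have hvx : v ≫ x = 0 := by
        by_contra hne
        have := hEj.isIso IsE.base hne
        apply hij
        rw [← cancel_mono (v ≫ x), ← Category.assoc, dt12 hZ, zero_comp, zero_comp]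
      obtain ⟨y, hy⟩ := dty3 hZ x hvx
      have : y = 0 := by
        by_contra hne
        obtain ⟨m, hm, hm'⟩ := hEi1.deg IsE.base hne
        omega
      rw [hy, this, comp_zero]
    obtain ⟨z, hz⟩ := dtc1 hout (c⟦(1 : ℤ)⟧') (by
      rw [← Functor.map_comp, hZE (c ≫ _), Functor.map_zero])
    obtain ⟨ww⟩ := PE_retract tw z (tw.dl tw.E ≫ c'⟦(1 : ℤ)⟧') (by
        rw [← reassoc_of% hz, ← Functor.map_comp, hcc, CategoryTheory.Functor.map_id]) (by
        intro h
        apply hv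
        have h' : 𝟙 Z = 0 := by
          apply (shiftFunctor C (1 : ℤ)).map_injective
          simpa using h
        rw [← Category.comp_id v, h', comp_zero])
    have hne : z0 ≫ ww.hom ≠ 0 := by
      intro h
      apply hz0
      rw [← cancel_mono ww.hom, h, zero_comp]
    apply hne
    obtain ⟨y, hy⟩ := shift_lift2 hZ (z0 ≫ ww.hom) (by
      by_contra hne
      obtain ⟨m, hm, hm'⟩ := (hS _).deg (hS _) hne
      omega)
    rw [hy]
    have : y = 0 := by
      by_contra hne
      obtain ⟨m, hm, hm'⟩ := (hS _).deg (hEj.shift 1 1 (by ring)) hne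
      omega
    rw [this, zero_comp]

end Part6

section Part7
variable {C}
variable {d : ℕ}

theorem IsE.factor {O : PdObject C d} {X X' Y : C} {a b : ℤ} (hX : IsE O X a) (hX' : IsE O X' a)
    (hY : IsE O Y b) {v : X ⟶ Y} {u : X' ⟶ Y} (hv : v ≠ 0) (hu : u ≠ 0) :
    ∃ α : X ≅ X', v = α.hom ≫ u := by
  obtain ⟨e⟩ := hX
  obtain ⟨e'⟩ := hX'
  obtain ⟨f⟩ := hY
  obtain ⟨w, hw⟩ := Ehom_left O le_rfl (u := e'.inv ≫ u ≫ f.hom) (fun h => hu (by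
    have : u = e'.hom ≫ (e'.inv ≫ u ≫ f.hom) ≫ f.inv := by simp
    rw [this, h]; simp)) (e.inv ≫ v ≫ f.hom)
  have h1 : v = e.hom ≫ w ≫ e'.inv ≫ u := by
    have : v = e.hom ≫ (e.inv ≫ v ≫ f.hom) ≫ f.inv := by simp
    rw [this, hw]; simp
  have : IsIso w := Eendo_iso O (by rintro rfl; apply hv; rw [h1]; simp)
  exact ⟨e ≪≫ asIso w ≪≫ e'.symm, by simpa using h1⟩

theorem Dec.mapSrc {O : PdObject C d} {X : C} {ι : Type} [Fintype ι] {a : ι → ℤ}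
    (D : Dec O X ι a) (F : C ⥤ C) [F.Additive] {W : C} {x y : F.obj X ⟶ W}
    (h : ∀ i, F.map (D.s i) ≫ x = F.map (D.s i) ≫ y) : x = y := by
  rw [← Category.id_comp x, ← Category.id_comp y, ← CategoryTheory.Functor.map_id, ← D.tot,
    Functor.map_sum, Preadditive.sum_comp, Preadditive.sum_comp]
  refine Finset.sum_congr rfl fun i _ => ?_
  rw [Functor.map_comp, Category.assoc, h, Category.assoc]

theorem Dec.mapSum {O : PdObject C d} {X : C} {ι : Type} [Fintype ι] {a : ι → ℤ}
    (D : Dec O X ι a) (F : C ⥤ C) [F.Additive] {W : C} (f : ∀ i, F.obj (O.E⟦a i⟧) ⟶ W) (i : ι) :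
    F.map (D.s i) ≫ (∑ k, F.map (D.p k) ≫ f k) = f i := by
  classical
  rw [Preadditive.comp_sum, Finset.sum_eq_single i]
  · rw [← Category.assoc, ← Functor.map_comp, D.sp, CategoryTheory.Functor.map_id,
      Category.id_comp]
  · intro k _ hk
    rw [← Category.assoc, ← Functor.map_comp, D.sp0 i k hk.symm, Functor.map_zero, zero_comp]
  · simp

theorem Dec.mapIso {O : PdObject C d} {X : C} {ι : Type} [Fintype ι] {a : ι → ℤ}
    (D : Dec O X ι a) (F F' : C ⥤ C) [F.Additive] [F'.Additive]
    (α : ∀ i, F.obj (O.E⟦a i⟧) ≅ F'.obj (O.E⟦a i⟧)) :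
    ∃ e : F.obj X ≅ F'.obj X, ∀ i, F.map (D.s i) ≫ e.hom = (α i).hom ≫ F'.map (D.s i) := by
  obtain ⟨e, he⟩ : ∃ e, e = ∑ k, F.map (D.p k) ≫ (α k).hom ≫ F'.map (D.s k) := ⟨_, rfl⟩
  obtain ⟨e', he'⟩ : ∃ e, e = ∑ k, F'.map (D.p k) ≫ (α k).inv ≫ F.map (D.s k) := ⟨_, rfl⟩
  have h1 : ∀ i, F.map (D.s i) ≫ e = (α i).hom ≫ F'.map (D.s i) := fun i => by
    rw [he]; exact D.mapSum F _ i
  have h2 : ∀ i, F'.map (D.s i) ≫ e' = (α i).inv ≫ F.map (D.s i) := fun i => by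
    rw [he']; exact D.mapSum F' _ i
  refine ⟨⟨e, e', D.mapSrc F fun i => ?_, D.mapSrc F' fun i => ?_⟩, h1⟩
  · rw [reassoc_of% (h1 i), h2]; simp
  · rw [reassoc_of% (h2 i), h1]; simp

variable (tw : PdTwist C d)

theorem PEn (n : ℤ) : IsE tw.toPdObject (tw.P.functor.obj (tw.E⟦n⟧)) (n + (-2 * (d : ℤ))) := by
  let := tw.commShift
  obtain ⟨e⟩ := (PE_iso tw).shift n _ (add_comm _ _)
  exact ⟨(tw.P.functor.commShiftIso n).app tw.E ≪≫ e⟩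

theorem R1 {X Y : C} {ι κ : Type} [Fintype ι] [Fintype κ] {a : ι → ℤ} {b : κ → ℤ}
    (DX0 : Dec tw.toPdObject X ι a) (DY0 : Dec tw.toPdObject Y κ b) (θ : X ⟶ Y) :
    ∃ (e1 : tw.P.functor.obj X ≅ X⟦-2 * (d : ℤ)⟧) (e2 : tw.P.functor.obj Y ≅ Y⟦-2 * (d : ℤ)⟧),
      tw.P.functor.map θ ≫ e2.hom = e1.hom ≫ θ⟦-2 * (d : ℤ)⟧' := by
  classical
  have := P_additive tw
  obtain ⟨DX, DY, hPP⟩ := DX0.diag DY0 θ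
  have hs : ∀ n : ℤ, IsE tw.toPdObject (tw.E⟦n⟧⟦-2 * (d : ℤ)⟧) (n + (-2 * (d : ℤ))) :=
    fun n => (IsE.refl n).shift _ _ rfl
  have hε : ∀ n : ℤ, Nonempty (tw.P.functor.obj (tw.E⟦n⟧) ≅ tw.E⟦n⟧⟦-2 * (d : ℤ)⟧) := by
    intro n
    obtain ⟨e⟩ := PEn tw n
    obtain ⟨e'⟩ := hs n
    exact ⟨e ≪≫ e'.symm⟩
  obtain ⟨ε, -⟩ : ∃ _ : ∀ n : ℤ, tw.P.functor.obj (tw.E⟦n⟧) ≅ tw.E⟦n⟧⟦-2 * (d : ℤ)⟧, True :=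
    ⟨fun n => (hε n).some, trivial⟩
  have hα : ∀ i, ∃ α : tw.P.functor.obj (tw.E⟦a i⟧) ≅ tw.E⟦a i⟧⟦-2 * (d : ℤ)⟧,
      ∀ j, DX.s i ≫ θ ≫ DY.p j ≠ 0 →
        tw.P.functor.map (DX.s i ≫ θ ≫ DY.p j) ≫ (ε (b j)).hom =
          α.hom ≫ (DX.s i ≫ θ ≫ DY.p j)⟦-2 * (d : ℤ)⟧' := by
    intro i
    by_cases h : ∃ j, DX.s i ≫ θ ≫ DY.p j ≠ 0
    · obtain ⟨j, hj⟩ := h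
      obtain ⟨α, hα⟩ := (PEn tw (a i)).factor (hs (a i)) (hs (b j))
        (v := tw.P.functor.map (DX.s i ≫ θ ≫ DY.p j) ≫ (ε (b j)).hom)
        (u := (DX.s i ≫ θ ≫ DY.p j)⟦-2 * (d : ℤ)⟧') (by
          intro h0
          apply hj
          apply tw.P.functor.map_injective
          rw [← cancel_mono (ε (b j)).hom, h0, Functor.map_zero, zero_comp]) (by
          intro h0
          apply hj
          apply (shiftFunctor C (-2 * (d : ℤ))).map_injective
          rw [h0, Functor.map_zero])
      refine ⟨α, fun j' hj' => ?_⟩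
      obtain rfl := hPP.1 i j j' hj hj'
      exact hα
    · push Not at h
      exact ⟨ε (a i), fun j hj => absurd (h j) hj⟩
  choose α hα using hα
  obtain ⟨e1, he1⟩ := DX.mapIso tw.P.functor (shiftFunctor C (-2 * (d : ℤ))) α
  obtain ⟨e2, he2⟩ := DY.mapIso tw.P.functor (shiftFunctor C (-2 * (d : ℤ))) (fun j => ε (b j))
  refine ⟨e1, e2, DX.mapSrc tw.P.functor fun i => ?_⟩
  by_cases h : ∃ j, DX.s i ≫ θ ≫ DY.p j ≠ 0
  · obtain ⟨j, hj⟩ := h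
    have hrow := hPP.row hj
    have hu := hα i j hj
    generalize DX.s i ≫ θ ≫ DY.p j = u at hrow hu
    rw [reassoc_of% (he1 i), ← Functor.map_comp_assoc, ← Functor.map_comp, hrow,
      Functor.map_comp, Functor.map_comp, Category.assoc, he2, reassoc_of% hu]
  · push Not at h
    have h0 : DX.s i ≫ θ = 0 := DY.hom_ext_tgt fun j => by rw [Category.assoc, h, zero_comp]
    rw [reassoc_of% (he1 i), ← Functor.map_comp_assoc, ← Functor.map_comp, h0]
    simp

theorem PT_iso (F : C) : Nonempty (tw.P.functor.obj (tw.T F) ≅ (tw.T F)⟦-2 * (d : ℤ)⟧) := by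
  let := tw.commShift
  have := P_additive tw
  obtain ⟨k, ns, ⟨e⟩, -⟩ := tw.H_iso F
  obtain ⟨DY⟩ := Dec.ofIso (O := tw.toPdObject) e
  obtain ⟨DX⟩ := DY.shift (-2) (fun i => ns i - 2) (fun i => by ring)
  obtain ⟨e1, e2, h12⟩ := R1 tw DX DY (tw.θ F)
  obtain ⟨h1, hT1⟩ := dist_map tw.P.functor (tw.P.functor.commShiftIso (1 : ℤ)) (tw.innerTri F)
  obtain ⟨h2, hT2⟩ := dist_shift (-2 * (d : ℤ)) (tw.innerTri F)
  exact cone_iso hT1 hT2 e1 e2 h12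

theorem PTk_iso (F : C) (m : ℤ) : Nonempty (tw.P.functor.obj ((tw.T F)⟦m⟧) ≅
    (tw.T F)⟦m - 2 * (d : ℤ)⟧) := by
  let := tw.commShift
  obtain ⟨e⟩ := PT_iso tw F
  exact ⟨(tw.P.functor.commShiftIso m).app (tw.T F) ≪≫ (shiftFunctor C m).mapIso e ≪≫
    (shiftFunctorAdd' C (-2 * (d : ℤ)) m (m - 2 * (d : ℤ)) (by ring)).symm.app _⟩

/-- There is a distinguished triangle `A → B → Z → A[1]`. -/
def TriEx (A B Z : C) : Prop :=
  ∃ (x : A ⟶ B) (y : B ⟶ Z) (z : Z ⟶ A⟦(1 : ℤ)⟧), Triangle.mk x y z ∈ distTriang C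

/-- The triangles `P^k G → P^{k+1} G → A[-2dk+1]`. -/
theorem Ptri (G : C) (k : ℕ) : TriEx ((fun X => tw.P.functor.obj X)^[k] G)
      ((fun X => tw.P.functor.obj X)^[k + 1] G) ((tw.T G)⟦-2 * (d : ℤ) * k + 1⟧) := by
  let _ := tw.commShift
  have := P_additive tw
  induction k with
  | zero =>
    have h := dtrot (tw.outerTri G)
    have e0 : (-2 * (d : ℤ) * ((0 : ℕ) : ℤ) + 1) = 1 := by simp
    rw [e0]
    exact ⟨_, _, _, h⟩
  | succ k ih =>
    obtain ⟨x, y, z, h⟩ := ih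
    obtain ⟨h', hT⟩ := dist_map tw.P.functor (tw.P.functor.commShiftIso (1 : ℤ)) h
    obtain ⟨e⟩ := PTk_iso tw G (-2 * (d : ℤ) * k + 1)
    have e0 : -2 * (d : ℤ) * k + 1 - 2 * d = -2 * (d : ℤ) * ((k + 1 : ℕ) : ℤ) + 1 := by
      push_cast; ring
    rw [e0] at e
    have h3 : TriEx _ _ _ := ⟨_, _, _, dtiso3 hT e.symm⟩
    convert h3 using 1
    · exact Function.iterate_succ_apply' _ k G
    · exact Function.iterate_succ_apply' _ (k + 1) G

theorem Pcs (G : C) (t r : ℝ) (hr : r ∈ complexitySet C G (tw.T G) t) (n : ℕ) :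
    1 + r * ∑ k ∈ Finset.range n, Real.exp ((-2 * (d : ℝ) * k + 1) * t) ∈
      complexitySet C G ((fun X => tw.P.functor.obj X)^[n] G) t := by
  induction n with
  | zero => simpa using cs_self G t
  | succ n ih =>
    obtain ⟨x, y, z, h⟩ := Ptri tw G n
    have h1 := cs_add ih (cs_shift hr (-2 * (d : ℤ) * n + 1)) h
    rw [Finset.sum_range_succ, mul_add, ← add_assoc]
    simpa using h1

end Part7

/-- With `A := Cone(Hom^{*-2}(ℰ,G) ⊗ ℰ → Hom^*(ℰ,G) ⊗ ℰ)` (the inner cone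
`T G` of the twist construction at the split generator `G`), for every `n ≥ 1` and `t ∈ ℝ`:
`δ_t(G, P_ℰ^n(G)) ≤ 1 + δ_t(G, A) · ∑_{k=0}^{n-1} e^{(-2dk+1)t}`. -/
theorem complexity_iterate_le (d : ℕ) (tw : PdTwist C d)
    (G : C) (hG : IsSplitGenerator C G) (n : ℕ) (hn : 1 ≤ n) (t : ℝ) :
    complexity C G ((fun X => tw.P.functor.obj X)^[n] G) t
      ≤ 1 + complexity C G (tw.T G) t *
          ∑ k ∈ Finset.range n, Real.exp ((-2 * (d : ℝ) * k + 1) * t) := by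
  have hS : 0 < ∑ k ∈ Finset.range n, Real.exp ((-2 * (d : ℝ) * k + 1) * t) :=
    Finset.sum_pos (fun k _ => Real.exp_pos _) ⟨0, Finset.mem_range.2 hn⟩
  have key : ∀ r ∈ complexitySet C G (tw.T G) t,
      (complexity C G ((fun X => tw.P.functor.obj X)^[n] G) t - 1) /
        (∑ k ∈ Finset.range n, Real.exp ((-2 * (d : ℝ) * k + 1) * t)) ≤ r := by
    intro r hr
    rw [div_le_iff₀ hS, sub_le_iff_le_add']
    exact csInf_le ⟨0, fun r hr => cs_nonneg hr⟩ (Pcs tw G t r hr n)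
  have h2 := le_csInf (cs_nonempty (hG (tw.T G)) t) key
  rw [div_le_iff₀ hS, sub_le_iff_le_add'] at h2
  exact h2
end

section
/- Let X be a smooth projective variety of dimension 2d over ℂ and let ℰ ∈ D^b(X) be a ℙ^d-object with associated ℙ^d-twist P_ℰ. Then for every t ≤ 0, h_t(P_ℰ) ≥ -2dt. More precisely, for any split generator G of D^b(X), lim_{n→∞} (1/n) log δ_t(G, P_ℰ^n(ℰ)) = lim_{n→∞} (1/n) log (δ_t(G, ℰ) e^{-2ndt}) = -2dt. -/
open CategoryTheory CategoryTheory.Limits CategoryTheory.Pretriangulated Filter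

universe v u

variable (C : Type u) [Category.{v} C] [Preadditive C] [HasZeroObject C]
  [HasShift C ℤ] [∀ n : ℤ, (shiftFunctor C n).Additive] [Pretriangulated C]
  [HasFiniteBiproducts C] [CategoryTheory.Linear ℂ C]
  [∀ X Y : C, Module.Finite ℂ (X ⟶ Y)]

/-- All morphisms from `X` to `Y` vanish. -/
def HomV {C : Type u} [Category.{v} C] [Preadditive C] (X Y : C) : Prop := ∀ f : X ⟶ Y, f = 0

set_option linter.unusedSectionVars false

section HomVLemmas

variable {C}

lemma HomV.isoL {X X' Y : C} (e : X ≅ X') (h : HomV X Y) : HomV X' Y := by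
  intro f
  have := h (e.hom ≫ f)
  rw [← cancel_epi e.hom, this, comp_zero]

lemma HomV.isoR {X Y Y' : C} (e : Y ≅ Y') (h : HomV X Y) : HomV X Y' := by
  intro f
  have := h (f ≫ e.inv)
  rw [← cancel_mono e.inv, this, zero_comp]

lemma HomV.of_shift {X Y : C} (n : ℤ) (h : HomV (X⟦n⟧) (Y⟦n⟧)) : HomV X Y := by
  intro f
  apply (shiftFunctor C n).map_injective
  rw [h ((shiftFunctor C n).map f), Functor.map_zero]

lemma HomV.shift {X Y : C} (n : ℤ) (h : HomV X Y) : HomV (X⟦n⟧) (Y⟦n⟧) := by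
  intro f
  obtain ⟨g, rfl⟩ := (shiftFunctor C n).map_surjective f
  rw [h g, Functor.map_zero]

/-- double shift on the right. -/
lemma homV_shift_shift {X Y : C} (a b c : ℤ) (h : a + b = c) :
    HomV X (Y⟦a⟧⟦b⟧) ↔ HomV X (Y⟦c⟧) :=
  ⟨HomV.isoR ((shiftFunctorAdd' C a b c h).symm.app Y),
    HomV.isoR ((shiftFunctorAdd' C a b c h).app Y)⟩

lemma homV_zero {X Y : C} : HomV X (Y⟦(0 : ℤ)⟧) ↔ HomV X Y :=
  ⟨HomV.isoR ((shiftFunctorZero C ℤ).app Y), HomV.isoR ((shiftFunctorZero C ℤ).symm.app Y)⟩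

lemma homV_shiftL {X Y : C} (a b : ℤ) (h : a + b = 0) :
    HomV (X⟦a⟧) Y ↔ HomV X (Y⟦b⟧) := by
  constructor
  · intro H
    have := H.shift b
    exact HomV.isoL ((shiftFunctorCompIsoId C a b h).app X) this
  · intro H
    have := H.shift a
    exact HomV.isoR ((shiftFunctorCompIsoId C b a (by omega)).app Y) this

lemma homV_midR {T : Triangle C} (hT : T ∈ distTriang C) {X : C} (h1 : HomV X T.obj₁)
    (h3 : HomV X T.obj₃) : HomV X T.obj₂ := by
  intro f
  obtain ⟨g, hg⟩ := Triangle.coyoneda_exact₂ T hT f (h3 _)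
  rw [hg, h1 g, zero_comp]

lemma homV_midL {T : Triangle C} (hT : T ∈ distTriang C) {X : C} (h1 : HomV T.obj₁ X)
    (h3 : HomV T.obj₃ X) : HomV T.obj₂ X := by
  intro f
  obtain ⟨g, hg⟩ := Triangle.yoneda_exact₂ T hT f (h1 _)
  rw [hg, h3 g, comp_zero]

lemma homV_midR_shift {T : Triangle C} (hT : T ∈ distTriang C) {X : C} (j : ℤ)
    (h1 : HomV X (T.obj₁⟦j⟧)) (h3 : HomV X (T.obj₃⟦j⟧)) : HomV X (T.obj₂⟦j⟧) := by
  rw [← homV_shiftL (-j) j (by omega)] at *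
  exact homV_midR hT h1 h3

lemma HomV.eq_zero {X : C} (h : HomV X X) : IsZero X :=
  (IsZero.iff_id_eq_zero X).2 (h _)

end HomVLemmas

section PdLemmas

variable {C} {d : ℕ}

/-- the negative-degree part. -/
lemma PdObject.neg (tw : PdObject C d) (n : ℤ) (hn : n < 0) : HomV tw.E (tw.E⟦n⟧) := by
  apply tw.hom_rank_zero
  rintro ⟨k, _, hk⟩
  omega

lemma PdObject.end_scalar (tw : PdObject C d) (f : tw.E ⟶ tw.E) : ∃ c : ℂ, f = c • 𝟙 tw.E := by
  have h1 := tw.hom_rank_one 0 (Nat.zero_le _)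
  set e := (shiftFunctorZero' C (2 * ((0 : ℕ) : ℤ)) (by simp)).app tw.E
  have hne : e.inv ≠ 0 := by
    intro h
    apply tw.nonzero
    rw [IsZero.iff_id_eq_zero]
    have := e.inv_hom_id
    rw [h, zero_comp] at this
    exact this.symm
  obtain ⟨c, hc⟩ := exists_smul_eq_of_finrank_eq_one h1 hne (f ≫ e.inv)
  refine ⟨c, ?_⟩
  rw [← cancel_mono e.inv, ← hc]
  simp

lemma PdObject.isIso_of_ne (tw : PdObject C d) (f : tw.E ⟶ tw.E) (hf : f ≠ 0) : IsIso f := by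
  obtain ⟨c, rfl⟩ := tw.end_scalar f
  have hc : c ≠ 0 := by
    rintro rfl
    simp at hf
  exact ⟨c⁻¹ • 𝟙 _, by simp [smul_smul, hc], by simp [smul_smul, hc]⟩

lemma PdTwist.support (tw : PdTwist C d) (F : C) :
    ∃ a b : ℤ, ∀ n : ℤ, ¬ HomV tw.E (F⟦n⟧) → a ≤ n ∧ n ≤ b := by
  obtain ⟨k, ns, -, h⟩ := tw.H_iso F
  obtain ⟨M, hM⟩ := (Set.finite_range ns).bddAbove
  obtain ⟨m, hm⟩ := (Set.finite_range ns).bddBelow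
  refine ⟨-M, -m, fun n hn => ?_⟩
  have hpos : 0 < Module.finrank ℂ (tw.E ⟶ F⟦n⟧) := by
    rw [Nat.pos_iff_ne_zero]
    intro h0
    apply hn
    have := (Module.finrank_zero_iff (R := ℂ)).1 h0
    exact fun f => Subsingleton.elim _ _
  rw [← h n, Finset.card_pos] at hpos
  obtain ⟨i, hi⟩ := hpos
  simp only [Finset.mem_filter, Finset.mem_univ, true_and] at hi
  have h1 := hM (Set.mem_range_self i)
  have h2 := hm (Set.mem_range_self i)
  omega

/-- The object `Hom^*(E,E) ⊗ E`: what its summands are. -/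
lemma PdTwist.H_self (tw : PdTwist C d) :
    (∀ Y : C, (∀ k : ℕ, k ≤ d → HomV (tw.E⟦-2 * (k : ℤ)⟧) Y) → HomV (tw.H tw.E) Y) ∧
    (∀ Y : C, HomV (tw.H tw.E) Y → HomV (tw.E⟦-2 * (d : ℤ)⟧) Y) := by
  obtain ⟨k, ns, ⟨e⟩, h⟩ := tw.H_iso tw.E
  constructor
  · intro Y hY
    refine HomV.isoL e.symm ?_
    intro f
    apply biproduct.hom_ext'
    intro i
    rw [comp_zero]
    have h1 : ∃ k : ℕ, k ≤ d ∧ - ns i = 2 * (k : ℤ) := by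
      by_contra hcon
      have h2 := tw.hom_rank_zero _ hcon
      have h3 := h (- ns i)
      have : Subsingleton (tw.E ⟶ tw.E⟦-ns i⟧) := ⟨fun a b => by rw [h2 a, h2 b]⟩
      rw [Module.finrank_zero_of_subsingleton, Finset.card_eq_zero] at h3
      have : i ∈ (Finset.univ.filter fun j => ns j = - - ns i) := by simp
      rw [h3] at this
      simp at this
    obtain ⟨k, hk, hk'⟩ := h1
    have h4 := hY k hk
    rw [show -2 * (k : ℤ) = ns i by omega] at h4
    exact h4 _
  · intro Y hY
    have h3 := h (2 * (d : ℤ))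
    rw [tw.hom_rank_one d le_rfl] at h3
    have hp : 0 < (Finset.univ.filter fun i => ns i = -(2 * (d : ℤ))).card := by omega
    rw [Finset.card_pos] at hp
    obtain ⟨i, hi⟩ := hp
    simp only [Finset.mem_filter, Finset.mem_univ, true_and] at hi
    rw [show -2 * (d : ℤ) = ns i by omega]
    have h5 := HomV.isoL e hY
    intro f
    have h6 := h5 (biproduct.π _ i ≫ f)
    have h7 := congrArg (fun g => biproduct.ι (fun i => tw.E⟦ns i⟧) i ≫ g) h6
    simpa using h7

lemma PdTwist.le_amp (tw : PdTwist C d) (Y : C)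
    (hY : ∀ i : ℤ, i ≤ 2 * d → HomV tw.E (Y⟦i⟧)) : HomV (tw.P.functor.obj tw.E) Y := by
  have hH : ∀ j : ℤ, j ≤ 0 → HomV (tw.H tw.E) (Y⟦j⟧) := by
    intro j hj
    apply tw.H_self.1
    intro k hk
    rw [homV_shiftL _ (2 * (k : ℤ)) (by omega), homV_shift_shift _ _ _ rfl]
    exact hY _ (by omega)
  refine homV_midL (rot_of_distTriang _ (tw.outerTri tw.E)) ?_ ?_
  · exact homV_zero.1 (hY 0 (by omega))
  · change HomV ((tw.T tw.E)⟦(1 : ℤ)⟧) Y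
    rw [homV_shiftL 1 (-1) (by omega)]
    refine homV_midL (rot_of_distTriang _ (tw.innerTri tw.E)) ?_ ?_
    · exact hH _ (by omega)
    · change HomV ((tw.H tw.E)⟦(-2 : ℤ)⟧⟦(1 : ℤ)⟧) _
      rw [homV_shiftL 1 (-1) (by omega), homV_shiftL (-2) 2 (by omega),
        homV_shift_shift (-1) 2 1 rfl, homV_shift_shift (-1) 1 0 rfl]
      exact hH _ le_rfl

lemma PdTwist.top_ne (tw : PdTwist C d) :
    ¬ HomV (tw.P.functor.obj tw.E) (tw.E⟦-2 * (d : ℤ)⟧) := by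
  intro h
  have h1 : HomV ((tw.T tw.E)⟦(1 : ℤ)⟧) (tw.E⟦-2 * (d : ℤ)⟧) := by
    refine homV_midL (rot_of_distTriang _ (rot_of_distTriang _ (tw.outerTri tw.E))) h ?_
    change HomV (tw.E⟦(1 : ℤ)⟧) _
    rw [homV_shiftL 1 (-1) (by omega), homV_shift_shift _ _ _ rfl]
    exact tw.neg _ (by omega)
  rw [homV_shiftL 1 (-1) (by omega), homV_shift_shift _ _ _ rfl] at h1
  have h2 : HomV ((tw.H tw.E)⟦(-2 : ℤ)⟧⟦(1 : ℤ)⟧) (tw.E⟦-2 * (d : ℤ) + -1⟧) := by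
    refine homV_midL (rot_of_distTriang _ (rot_of_distTriang _ (tw.innerTri tw.E))) h1 ?_
    change HomV ((tw.H tw.E)⟦(1 : ℤ)⟧) _
    rw [homV_shiftL 1 (-1) (by omega), homV_shift_shift _ _ _ rfl]
    apply tw.H_self.1
    intro k hk
    rw [homV_shiftL _ (2 * (k : ℤ)) (by omega), homV_shift_shift _ _ _ rfl]
    exact tw.neg _ (by omega)
  rw [homV_shiftL 1 (-1) (by omega), homV_shiftL (-2) 2 (by omega),
    homV_shift_shift _ _ _ rfl, homV_shift_shift _ _ (-2 * (d : ℤ)) (by omega)] at h2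
  have h3 := tw.H_self.2 _ h2
  have h4 := h3.of_shift
  exact tw.nonzero h4.eq_zero

lemma PdTwist.homV_P (tw : PdTwist C d) (X Y : C) (n : ℤ) :
    HomV (tw.P.functor.obj X) ((tw.P.functor.obj Y)⟦n⟧) ↔ HomV X (Y⟦n⟧) := by
  let := tw.commShift
  have e : tw.P.functor.obj (Y⟦n⟧) ≅ (tw.P.functor.obj Y)⟦n⟧ :=
    (tw.P.functor.commShiftIso n).app Y
  have key : HomV (tw.P.functor.obj X) (tw.P.functor.obj (Y⟦n⟧)) ↔ HomV X (Y⟦n⟧) := by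
    constructor
    · intro h f
      apply tw.P.functor.map_injective
      rw [h (tw.P.functor.map f), h (tw.P.functor.map 0)]
    · intro h f
      obtain ⟨g, rfl⟩ := tw.P.functor.map_surjective f
      rw [h g, Functor.map_zero]
  exact ⟨fun h => key.1 (h.isoR e.symm), fun h => (key.2 h).isoR e⟩

/-- The computation `P_E(E) ≅ E[-2d]`. -/
lemma PdTwist.P_self (tw : PdTwist C d) :
    Nonempty (tw.P.functor.obj tw.E ≅ tw.E⟦-2 * (d : ℤ)⟧) := by
  set W := tw.P.functor.obj tw.E with hW
  have hWW : ¬ HomV W W := by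
    intro h
    have h1 := (tw.homV_P tw.E tw.E 0).1 (homV_zero.2 h)
    exact tw.nonzero (homV_zero.1 h1).eq_zero
  -- the least degree of a morphism from `E`
  obtain ⟨a, b, hab⟩ := tw.support W
  have hex : ∃ i : ℤ, ¬ HomV tw.E (W⟦i⟧) := by
    by_contra hcon
    push Not at hcon
    exact hWW (tw.le_amp W fun i _ => hcon i)
  classical
  obtain ⟨p, hp, hmin⟩ := Int.exists_least_of_bdd ⟨a, fun z hz => (hab z hz).1⟩ hex
  have hlt : ∀ i < p, HomV tw.E (W⟦i⟧) := by
    intro i hi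
    by_contra hcon
    have := hmin i hcon
    omega
  obtain ⟨s, hs⟩ : ∃ s : tw.E ⟶ W⟦p⟧, s ≠ 0 := by
    simpa [HomV] using hp
  obtain ⟨u, hu⟩ : ∃ u : W⟦2 * (d : ℤ)⟧ ⟶ tw.E, u ≠ 0 := by
    have h1 := tw.top_ne
    rw [← homV_shiftL (2 * (d : ℤ)) _ (by omega)] at h1
    simpa [HomV] using h1
  obtain ⟨Z, g, δ, hT⟩ := distinguished_cocone_triangle s
  have hT1 := inv_rot_of_distTriang _ hT
  have hT2 := inv_rot_of_distTriang _ hT1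
  have hZ : HomV tw.E (Z⟦(-1 : ℤ)⟧) := by
    intro f
    obtain ⟨c, hc⟩ := tw.end_scalar (f ≫ (Triangle.mk s g δ).invRotate.mor₁)
    have h0 : (Triangle.mk s g δ).invRotate.mor₁ ≫ s = 0 := comp_distTriang_mor_zero₁₂ _ hT1
    have h1 : c • s = 0 := by
      have h5 : (c • 𝟙 tw.E) ≫ s = 0 := by
        rw [← hc]
        exact (Category.assoc _ _ _).trans ((congrArg (fun q => f ≫ q) h0).trans comp_zero)
      simpa using h5
    have h2 : c = 0 := (smul_eq_zero.1 h1).resolve_right hs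
    rw [h2, zero_smul] at hc
    obtain ⟨w, hw⟩ := Triangle.coyoneda_exact₂ _ hT2 f hc
    have h3 : HomV tw.E ((W⟦p⟧)⟦(-1 : ℤ)⟧) := by
      rw [homV_shift_shift _ _ _ rfl]
      exact hlt _ (by omega)
    have hw0 : w = 0 := h3 w
    rw [hw, hw0]
    exact zero_comp
  have hZ' : ∀ j : ℤ, j ≤ 0 → HomV tw.E (Z⟦(-1 : ℤ)⟧⟦j⟧) := by
    intro j hj
    rcases hj.lt_or_eq with hj | rfl
    · refine homV_midR_shift hT2 j ?_ ?_
      · change HomV tw.E ((W⟦p⟧)⟦(-1 : ℤ)⟧⟦j⟧)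
        rw [homV_shift_shift _ _ _ rfl, homV_shift_shift _ _ _ rfl]
        exact hlt _ (by omega)
      · exact tw.neg j hj
    · exact homV_zero.2 hZ
  have hus : u ≫ s ≠ 0 := by
    intro h0
    obtain ⟨w, hw⟩ := Triangle.coyoneda_exact₂ _ hT1 u h0
    have h1 : HomV (W⟦2 * (d : ℤ)⟧) (Z⟦(-1 : ℤ)⟧) := by
      rw [homV_shiftL _ (-2 * (d : ℤ)) (by omega)]
      apply tw.le_amp
      intro i hi
      rw [homV_shift_shift _ _ _ rfl]
      exact hZ' _ (by omega)
    apply hu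
    have hw0 : w = 0 := h1 w
    rw [hw, hw0]
    exact zero_comp
  have hp1 : ¬ HomV tw.E (tw.E⟦p + -2 * (d : ℤ)⟧) := by
    rw [← tw.homV_P, ← homV_shift_shift _ _ _ rfl, ← homV_shiftL (2 * (d : ℤ)) _ (by omega)]
    exact fun h => hus (h _)
  have hp2 : 2 * (d : ℤ) ≤ p := by
    by_contra hcon
    exact hp1 (tw.neg _ (by omega))
  have hp3 : p ≤ 2 * (d : ℤ) := by
    by_contra hcon
    exact hWW (tw.le_amp W fun i hi => hlt i (by omega))
  obtain rfl : p = 2 * (d : ℤ) := le_antisymm hp3 hp2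
  have hiso : IsIso (u ≫ s) := by
    obtain ⟨v, hv⟩ := (shiftFunctor C (2 * (d : ℤ))).map_surjective (u ≫ s)
    obtain ⟨v', rfl⟩ := tw.P.functor.map_surjective v
    have : IsIso v' := by
      apply tw.isIso_of_ne
      rintro rfl
      apply hus
      rw [← hv]
      simp
    rw [← hv]
    infer_instance
  have hsu : IsIso (s ≫ u) := by
    apply tw.isIso_of_ne
    intro h0
    have h1 : (u ≫ s) ≫ (u ≫ s) = 0 := by
      simp only [Category.assoc]
      rw [← Category.assoc s u s, h0]
      simp
    have h2 : u ≫ s = 0 := by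
      rw [← cancel_epi (u ≫ s), h1, comp_zero]
    exact hus h2
  have hs' : IsIso s := by
    have h1 : IsSplitMono s :=
      ⟨⟨⟨u ≫ inv (s ≫ u), by rw [← Category.assoc]; exact IsIso.hom_inv_id _⟩⟩⟩
    have h2 : IsSplitEpi s :=
      ⟨⟨⟨inv (u ≫ s) ≫ u, by rw [Category.assoc]; exact IsIso.inv_hom_id _⟩⟩⟩
    exact isIso_of_mono_of_isSplitEpi s
  have e1 : W⟦2 * (d : ℤ)⟧⟦-2 * (d : ℤ)⟧ ≅ W :=
    (shiftFunctorCompIsoId C (2 * (d : ℤ)) (-2 * (d : ℤ)) (by omega)).app W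
  exact ⟨e1.symm ≪≫ ((shiftFunctor C (-2 * (d : ℤ))).mapIso (asIso s)).symm⟩

lemma PdTwist.P_iter_self (tw : PdTwist C d) (n : ℕ) :
    Nonempty ((fun X => tw.P.functor.obj X)^[n] tw.E ≅ tw.E⟦-2 * (d : ℤ) * n⟧) := by
  let := tw.commShift
  induction n with
  | zero => exact ⟨((shiftFunctorZero' C (-2 * (d : ℤ) * ((0 : ℕ) : ℤ)) (by simp)).symm.app _)⟩
  | succ n ih =>
    obtain ⟨e⟩ := ih
    obtain ⟨e'⟩ := tw.P_self
    rw [Function.iterate_succ_apply']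
    exact ⟨tw.P.functor.mapIso e ≪≫ (tw.P.functor.commShiftIso _).app tw.E ≪≫
      (shiftFunctor C _).mapIso e' ≪≫
      (shiftFunctorAdd' C _ _ _ (by push_cast; ring)).symm.app tw.E⟩

lemma PdTwist.P_hom (tw : PdTwist C d) (F : C) (m : ℤ) (h : ¬ HomV tw.E (F⟦m⟧)) :
    ¬ HomV tw.E ((tw.P.functor.obj F)⟦m + 2 * (d : ℤ)⟧) := by
  obtain ⟨e⟩ := tw.P_self
  rw [← tw.homV_P] at h
  intro h1
  apply h
  refine HomV.isoL e.symm ?_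
  rw [homV_shiftL _ (2 * (d : ℤ)) (by omega), homV_shift_shift _ _ _ rfl]
  exact h1

lemma PdTwist.P_iter_hom (tw : PdTwist C d) (F : C) (m : ℤ) (h : ¬ HomV tw.E (F⟦m⟧)) (n : ℕ) :
    ¬ HomV tw.E (((fun X => tw.P.functor.obj X)^[n] F)⟦m + 2 * (d : ℤ) * n⟧) := by
  induction n with
  | zero => simpa using h
  | succ n ih =>
    rw [Function.iterate_succ_apply']
    have := tw.P_hom _ _ ih
    rw [show m + 2 * (d : ℤ) * ((n + 1 : ℕ) : ℤ) = m + 2 * (d : ℤ) * n + 2 * (d : ℤ) by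
      push_cast; ring]
    exact this

/-! Complexity. -/

lemma BuildVal.bound {E G B : C} {t r : ℝ} (h : BuildVal C G t B r) :
    0 ≤ r ∧ ∀ m : ℤ, ¬ HomV E (B⟦m⟧) →
      ∃ n : ℤ, ¬ HomV E (G⟦n⟧) ∧ Real.exp (((n : ℝ) - m) * t) ≤ r := by
  induction h with
  | zero Z hZ =>
    refine ⟨le_rfl, fun m hm => (hm fun f => ?_).elim⟩
    exact ((shiftFunctor C m).map_isZero hZ).eq_of_tgt _ _
  | step A B n r f g h hT hA ih =>
    refine ⟨by have := ih.1; positivity, fun m hm => ?_⟩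
    by_cases h1 : HomV E (A⟦m⟧)
    · refine ⟨n + m, fun h2 => hm ?_, ?_⟩
      · exact homV_midR_shift hT m h1 ((homV_shift_shift n m _ rfl).2 h2)
      · have := ih.1
        push_cast
        simpa using this
    · obtain ⟨k, hk, hk'⟩ := ih.2 m h1
      refine ⟨k, hk, hk'.trans ?_⟩
      have := Real.exp_pos (n * t)
      linarith

lemma BuildVal.change {G B : C} {t r : ℝ} (h : BuildVal C G t B r) (t' : ℝ) :
    ∃ r', BuildVal C G t' B r' := by
  induction h with
  | zero Z hZ => exact ⟨_, .zero Z hZ⟩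
  | step A B n r f g h hT hA ih =>
    obtain ⟨r', hr'⟩ := ih
    exact ⟨_, .step A B n r' f g h hT hr'⟩

lemma distTriang_replace {T : Triangle C} (hT : T ∈ distTriang C) {Z : C} (e : T.obj₃ ≅ Z) :
    ∃ (f : T.obj₁ ⟶ T.obj₂) (g : T.obj₂ ⟶ Z) (h : Z ⟶ T.obj₁⟦(1 : ℤ)⟧),
      Triangle.mk f g h ∈ distTriang C :=
  ⟨T.mor₁, T.mor₂ ≫ e.hom, e.inv ≫ T.mor₃, isomorphic_distinguished _ hT _
    (Triangle.isoMk _ _ (Iso.refl T.obj₁) (Iso.refl T.obj₂) e.symm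
      ((Category.comp_id T.mor₁).trans (Category.id_comp T.mor₁).symm)
      (((Category.assoc T.mor₂ e.hom e.inv).trans
        ((congrArg (fun q => T.mor₂ ≫ q) e.hom_inv_id).trans (Category.comp_id T.mor₂))).trans
        (Category.id_comp T.mor₂).symm)
      ((congrArg (fun q => (e.inv ≫ T.mor₃) ≫ q) ((shiftFunctor C (1 : ℤ)).map_id T.obj₁)).trans
        (Category.comp_id (e.inv ≫ T.mor₃))))⟩

lemma BuildVal.shift {G B : C} {t r : ℝ} (h : BuildVal C G t B r) (m : ℤ) :
    BuildVal C G t (B⟦m⟧) (Real.exp (m * t) * r) := by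
  induction h with
  | zero Z hZ =>
    rw [mul_zero]
    exact .zero _ ((shiftFunctor C m).map_isZero hZ)
  | step A B n r f g h hT hA ih =>
    have h1 := Triangle.shift_distinguished _ hT m
    have e : G⟦n⟧⟦m⟧ ≅ G⟦n + m⟧ := (shiftFunctorAdd C n m).symm.app G
    obtain ⟨f', g', h', h2⟩ := distTriang_replace h1 e
    have h3 : BuildVal C G t (B⟦m⟧) _ := BuildVal.step (A⟦m⟧) (B⟦m⟧) (n + m) _ f' g' h' h2 ih
    convert h3 using 1
    rw [mul_add, ← Real.exp_add]
    push_cast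
    ring_nf

lemma complexitySet_shift {G F F₁ : C} {t r : ℝ} (m : ℤ) (e : F₁ ≅ F⟦m⟧)
    (h : r ∈ complexitySet C G F t) : Real.exp (m * t) * r ∈ complexitySet C G F₁ t := by
  obtain ⟨B, F', hB, ⟨i⟩⟩ := h
  refine ⟨B⟦m⟧, F'⟦m⟧, hB.shift m, ⟨?_⟩⟩
  have := preservesBinaryBiproducts_of_preservesBiproducts (shiftFunctor C m)
  exact (shiftFunctor C m).mapIso i ≪≫ (shiftFunctor C m).mapBiprod F F' ≪≫
    biprod.mapIso e.symm (Iso.refl _)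

lemma complexitySet_nonempty {G : C} (hG : IsSplitGenerator C G) (F : C) (t : ℝ) :
    (complexitySet C G F t).Nonempty := by
  obtain ⟨r, B, F', hB, hi⟩ := hG F
  obtain ⟨r', hr'⟩ := hB.change t
  exact ⟨r', B, F', hr', hi⟩

lemma complexitySet_bound {E G F : C} {t r : ℝ} (h : r ∈ complexitySet C G F t) (m : ℤ)
    (hm : ¬ HomV E (F⟦m⟧)) :
    ∃ n : ℤ, ¬ HomV E (G⟦n⟧) ∧ Real.exp (((n : ℝ) - m) * t) ≤ r := by
  obtain ⟨B, F', hB, ⟨i⟩⟩ := h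
  refine hB.bound.2 m fun h1 => hm fun f => ?_
  have h2 := h1 (f ≫ (shiftFunctor C m).map (biprod.inl ≫ i.inv))
  have h3 := congrArg (fun q => q ≫ (shiftFunctor C m).map (i.hom ≫ biprod.fst)) h2
  simpa [← Functor.map_comp] using h3

lemma PdTwist.complexity_lb (tw : PdTwist C d) (t : ℝ) (ht : t ≤ 0) (G : C)
    (hG : IsSplitGenerator C G) : ∃ c : ℝ, 0 < c ∧ ∀ (F : C) (m : ℤ),
      ¬ HomV tw.E (F⟦m⟧) → c * Real.exp (-(m : ℝ) * t) ≤ complexity C G F t := by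
  obtain ⟨a, b, hab⟩ := tw.support G
  refine ⟨Real.exp (b * t), Real.exp_pos _, fun F m hm => ?_⟩
  refine le_csInf (complexitySet_nonempty hG F t) fun r hr => ?_
  obtain ⟨n, hn, hn'⟩ := complexitySet_bound hr m hm
  refine le_trans ?_ hn'
  rw [← Real.exp_add, Real.exp_le_exp]
  have h1 : (n : ℝ) ≤ b := by exact_mod_cast (hab n hn).2
  nlinarith

end PdLemmas

/-- an affine function of `n` divided by `n`. -/
lemma tendsto_affine_div (a b : ℝ) :
    Tendsto (fun n : ℕ => (a + b * n) / n) atTop (nhds b) := by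
  have h1 : Tendsto (fun n : ℕ => a / n + b) atTop (nhds (0 + b)) :=
    (tendsto_const_div_atTop_nhds_zero_nat a).add_const b
  rw [zero_add] at h1
  refine h1.congr' ?_
  filter_upwards [eventually_gt_atTop 0] with n hn
  have : (n : ℝ) ≠ 0 := by positivity
  field_simp

/-- For every `t ≤ 0`, `h_t(P_ℰ) ≥ -2dt` (stated as a `liminf` bound);
more precisely, for any split generator `G`,
`lim (1/n) log δ_t(G, P_ℰ^n(ℰ)) = lim (1/n) log (δ_t(G, ℰ) e^{-2ndt}) = -2dt`. -/
theorem entropy_PdTwist_ge (d : ℕ) (tw : PdTwist C d) (t : ℝ) (ht : t ≤ 0) :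
    ∀ G : C, IsSplitGenerator C G →
      (((-2 * (d : ℝ) * t : ℝ) : EReal) ≤
        atTop.liminf (fun n : ℕ =>
          ((Real.log (complexity C G ((fun X => tw.P.functor.obj X)^[n] G) t) / n : ℝ) : EReal))) ∧
      Tendsto (fun n : ℕ =>
          Real.log (complexity C G ((fun X => tw.P.functor.obj X)^[n] tw.E) t) / n)
        atTop (nhds (-2 * (d : ℝ) * t)) ∧
      Tendsto (fun n : ℕ =>
          Real.log (complexity C G tw.E t * Real.exp (-2 * (n : ℝ) * (d : ℝ) * t)) / n)
        atTop (nhds (-2 * (d : ℝ) * t)) := by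
  intro G hG
  obtain ⟨c, hc, hlb⟩ := tw.complexity_lb t ht G hG
  have hEE : ¬ HomV tw.E (tw.E⟦(0 : ℤ)⟧) := fun h => tw.nonzero (homV_zero.1 h).eq_zero
  refine ⟨?_, ?_, ?_⟩
  · obtain ⟨r, hr⟩ := complexitySet_nonempty hG tw.E t
    obtain ⟨m, hm, -⟩ := complexitySet_bound hr 0 hEE
    have h1 := tendsto_affine_div (Real.log c - m * t) (-2 * (d : ℝ) * t)
    have h2 : Tendsto (fun n : ℕ =>
        ((((Real.log c - m * t) + (-2 * (d : ℝ) * t) * n) / n : ℝ) : EReal)) atTop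
        (nhds ((-2 * (d : ℝ) * t : ℝ) : EReal)) :=
      (continuous_coe_real_ereal.tendsto _).comp h1
    rw [← h2.liminf_eq]
    refine liminf_le_liminf (Eventually.of_forall fun n => ?_)
    rw [EReal.coe_le_coe_iff]
    refine div_le_div_of_nonneg_right ?_ (Nat.cast_nonneg n)
    have h3 := hlb _ _ (tw.P_iter_hom G m hm n)
    have h4 := Real.log_le_log (by positivity) h3
    rw [Real.log_mul hc.ne' (Real.exp_pos _).ne', Real.log_exp] at h4
    refine le_trans (le_of_eq ?_) h4
    push_cast
    ring
  · obtain ⟨r, hr⟩ := complexitySet_nonempty hG tw.E t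
    have hub : ∀ n : ℕ, complexity C G ((fun X => tw.P.functor.obj X)^[n] tw.E) t ≤
        Real.exp (((-2 * (d : ℤ) * n : ℤ) : ℝ) * t) * r := by
      intro n
      obtain ⟨e⟩ := tw.P_iter_self n
      refine csInf_le ⟨0, ?_⟩ (complexitySet_shift _ e hr)
      rintro x ⟨B, F', hB, -⟩
      exact (hB.bound (E := G)).1
    have hr0 : 0 < r := by
      have h3 := hlb _ _ (tw.P_iter_hom tw.E 0 hEE 0)
      have h4 := hub 0
      have h5 : 0 < c * Real.exp (-((0 + 2 * (d : ℤ) * (0 : ℕ) : ℤ) : ℝ) * t) := by positivity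
      exact pos_of_mul_pos_right (lt_of_lt_of_le h5 (h3.trans h4)) (Real.exp_pos _).le
    refine tendsto_of_tendsto_of_tendsto_of_le_of_le
      (tendsto_affine_div (Real.log c) (-2 * (d : ℝ) * t))
      (tendsto_affine_div (Real.log r) (-2 * (d : ℝ) * t)) (fun n => ?_) (fun n => ?_)
    · refine div_le_div_of_nonneg_right ?_ (Nat.cast_nonneg n)
      have h3 := hlb _ _ (tw.P_iter_hom tw.E 0 hEE n)
      have h4 := Real.log_le_log (by positivity) h3
      rw [Real.log_mul hc.ne' (Real.exp_pos _).ne', Real.log_exp] at h4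
      refine le_trans (le_of_eq ?_) h4
      push_cast
      ring
    · refine div_le_div_of_nonneg_right ?_ (Nat.cast_nonneg n)
      have h3 := hlb _ _ (tw.P_iter_hom tw.E 0 hEE n)
      have h4 := Real.log_le_log (lt_of_lt_of_le (by positivity) h3) (hub n)
      rw [Real.log_mul (Real.exp_pos _).ne' hr0.ne', Real.log_exp] at h4
      refine le_trans h4 (le_of_eq ?_)
      push_cast
      ring
  · have h1 : 0 < complexity C G tw.E t :=
      lt_of_lt_of_le (by positivity) (hlb _ _ hEE)
    refine (tendsto_affine_div (Real.log (complexity C G tw.E t)) (-2 * (d : ℝ) * t)).congr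
      fun n => ?_
    rw [Real.log_mul h1.ne' (Real.exp_pos _).ne', Real.log_exp]
    ring
end
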